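/- arXiv:2311.10008 — 2 statements merged into one kernel-verified Lean document; each statement's English description precedes it below -/
import Mathlib

section
/- There exist a constant c > 0 and B₀ ≥ 3 such that for all real B ≥ B₀, the number of pairs (a, b) of positive integers with a ≤ B, b ≤ B, gcd(a,b) = 1, a ≡ 17 (mod 18), b ≡ 11 (mod 18), and such that every prime dividing ab is congruent to 2 modulo 3, is at least c·B²/log B. -/
open Finset in
theorem conv_sum (f g : ℕ → ℝ) (N : ℕ) :
    ∑ n ∈ Ioc 0 N, ∑ x ∈ n.divisorsAntidiagonal, f x.1 * g x.2 =
      ∑ n ∈ Ioc 0 N, f n * ∑ m ∈ Ioc 0 (N / n), g m := by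
  have h := ArithmeticFunction.sum_Ioc_mul_eq_sum_sum
    (⟨fun n => if n = 0 then 0 else f n, by simp⟩ : ArithmeticFunction ℝ)
    (⟨fun n => if n = 0 then 0 else g n, by simp⟩ : ArithmeticFunction ℝ) N
  simp only [ArithmeticFunction.coe_mk] at h
  convert h using 1
  · refine sum_congr rfl fun n _ => sum_congr rfl fun x hx => ?_
    have h0 := Nat.mem_divisorsAntidiagonal.1 hx
    have h1 : x.1 ≠ 0 := by rintro h; simp [h] at h0; omega
    have h2 : x.2 ≠ 0 := by rintro h; simp [h] at h0; omega
    simp [h1, h2]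
  · refine sum_congr rfl fun n hn => ?_
    have h1 : n ≠ 0 := by simp at hn; omega
    simp only [h1, if_false]
    congr 1
    refine sum_congr rfl fun m hm => ?_
    have h1 : m ≠ 0 := by simp at hm; omega
    simp [h1]

/-- The nontrivial character mod 3. -/
noncomputable def chi (n : ℕ) : ℝ := if n % 3 = 1 then 1 else if n % 3 = 2 then -1 else 0

theorem chi_mul (m n : ℕ) : chi (m * n) = chi m * chi n := by
  unfold chi
  rw [Nat.mul_mod]
  have h1 : m % 3 < 3 := Nat.mod_lt _ (by norm_num)
  have h2 : n % 3 < 3 := Nat.mod_lt _ (by norm_num)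
  generalize m % 3 = a at *
  generalize n % 3 = b at *
  interval_cases a <;> interval_cases b <;> norm_num

theorem abs_chi_le (n : ℕ) : |chi n| ≤ 1 := by
  unfold chi; split_ifs <;> simp

/-- Partial sums of `chi`. -/
noncomputable def chiS (n : ℕ) : ℝ := if n % 3 = 1 then 1 else 0

theorem chiS_succ (n : ℕ) : chiS (n + 1) = chiS n + chi (n + 1) := by
  unfold chi chiS
  rw [Nat.add_mod]
  have h1 : n % 3 < 3 := Nat.mod_lt _ (by norm_num)
  generalize n % 3 = a at *
  interval_cases a <;> norm_num

theorem abs_chiS_sub (m n : ℕ) : |chiS m - chiS n| ≤ 1 := by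
  unfold chiS; split_ifs <;> simp

open Finset in
theorem abel_bound (g : ℕ → ℝ) (M N : ℕ) (hMN : M ≤ N) (h0 : ∀ n, M < n → 0 ≤ g n)
    (hg : ∀ n, M < n → g (n + 1) ≤ g n) :
    |∑ n ∈ Ioc M N, chi n * g n| ≤ g (M + 1) := by
  have key : ∀ k, |∑ n ∈ Ioc M (M + k), chi n * g n - (chiS (M + k) - chiS M) * g (M + k + 1)|
      ≤ g (M + 1) - g (M + k + 1) := by
    intro k
    induction k with
    | zero => simp
    | succ k ih =>
      rw [← add_assoc, sum_Ioc_succ_top (by omega), chiS_succ]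
      have h1 := hg (M + k + 1) (by omega)
      have h2 := abs_chiS_sub (M + k + 1) M
      rw [chiS_succ] at h2
      rw [abs_le] at *
      constructor <;> nlinarith
  have h := key (N - M)
  rw [Nat.add_sub_cancel' hMN] at h
  have h1 := abs_chiS_sub N M
  have h2 := h0 (N + 1) (by omega)
  rw [abs_le] at *
  constructor <;> nlinarith

/-- Partial sums of `chi n / n`. -/
noncomputable def chiL (N : ℕ) : ℝ := ∑ n ∈ Finset.Ioc 0 N, chi n * (1 / (n : ℝ))

theorem chiL_sub (M N : ℕ) (h : M ≤ N) : |chiL N - chiL M| ≤ 1 / ((M : ℝ) + 1) := by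
  have h1 := abel_bound (fun n => 1 / (n : ℝ)) M N h (fun n _ => by positivity)
    (fun n hn => by
      have : (0 : ℝ) < n := by exact_mod_cast (by omega : 0 < n)
      push_cast
      gcongr; linarith)
  unfold chiL
  rw [← Finset.sum_Ioc_consecutive _ (Nat.zero_le M) h, add_sub_cancel_left]
  simpa using h1

theorem chiL_le (N : ℕ) : chiL N ≤ 1 := by
  have := chiL_sub 0 N (by omega)
  simp [chiL] at *
  exact (abs_le.1 this).2

theorem chiL_ge (N : ℕ) (hN : 1 ≤ N) : 1 / 6 ≤ chiL N := by
  rcases Nat.lt_or_ge N 2 with h | h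
  · obtain rfl : N = 1 := by omega
    norm_num [chiL, chi]
  · have h1 := chiL_sub 2 N h
    have h2 : chiL 2 = 1 / 2 := by
      norm_num [chiL, Finset.sum_Ioc_succ_top, chi]
    rw [h2, abs_le] at h1
    norm_num at h1
    linarith [h1.1]

open Finset in
theorem chi_log_bound (N : ℕ) : |∑ n ∈ Ioc 0 N, chi n * (Real.log n / n)| ≤ 2 := by
  have hlog : ∀ n : ℕ, Real.log n / n ≤ 1 := fun n => by
    rcases Nat.eq_zero_or_pos n with rfl | hn
    · simp
    · have : (0 : ℝ) < n := by exact_mod_cast hn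
      rw [div_le_one this]
      linarith [Real.log_le_sub_one_of_pos this]
  have hlog0 : ∀ n : ℕ, 0 ≤ Real.log n / n := fun n => by positivity
  have small : ∀ N ≤ 2, |∑ n ∈ Ioc 0 N, chi n * (Real.log n / n)| ≤ 1 := by
    intro N hN
    have h2 := hlog 2
    have h3 := hlog0 2
    push_cast at h2 h3
    interval_cases N
    · simp
    · simp
    · norm_num [Finset.sum_Ioc_succ_top, chi]
      rw [abs_le]; constructor <;> linarith
  rcases Nat.lt_or_ge N 3 with h | h
  · exact (small N (by omega)).trans (by norm_num)
  · have h1 := abel_bound (fun n => Real.log n / n) 2 N (by omega) (fun n _ => hlog0 n)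
      (fun n hn => by
        have h3 : (3 : ℝ) ≤ n := by exact_mod_cast hn
        have he := Real.exp_one_lt_d9
        apply Real.log_div_self_antitoneOn
        · simp; linarith
        · simp; linarith
        · push_cast; linarith)
    have h2 := small 2 le_rfl
    rw [← Finset.sum_Ioc_consecutive _ (Nat.zero_le 2) (by omega : 2 ≤ N)]
    have h3 := hlog 3
    have := abs_add_le (∑ n ∈ Ioc 0 2, chi n * (Real.log n / n)) (∑ n ∈ Ioc 2 N, chi n * (Real.log n / n))
    simp only [Nat.reduceAdd] at h1
    linarith

open Finset ArithmeticFunction in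
theorem mertens_chi (N : ℕ) (hN : 1 ≤ N) :
    |∑ d ∈ Ioc 0 N, chi d * vonMangoldt d / d| ≤ 60 := by
  have h1 := conv_sum (fun d => chi d * vonMangoldt d / d) (fun m => chi m * (1 / (m : ℝ))) N
  have h2 : ∑ n ∈ Ioc 0 N, ∑ x ∈ n.divisorsAntidiagonal,
      (fun d : ℕ => chi d * vonMangoldt d / d) x.1 * (fun m : ℕ => chi m * (1 / (m : ℝ))) x.2 =
      ∑ n ∈ Ioc 0 N, chi n * (Real.log n / n) := by
    refine sum_congr rfl fun n hn => ?_
    rw [← vonMangoldt_sum, ← Nat.sum_divisorsAntidiagonal (fun d _ => vonMangoldt d), sum_div, mul_sum]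
    refine sum_congr rfl fun x hx => ?_
    have h0 := (Nat.mem_divisorsAntidiagonal.1 hx).1
    rw [← h0, chi_mul]
    push_cast
    simp only [div_eq_mul_inv, mul_inv]
    ring
  rw [h2] at h1
  have hNpos : (0 : ℝ) < N := by exact_mod_cast hN
  have h3 : |∑ n ∈ Ioc 0 N, (chi n * vonMangoldt n / n) * (chiL (N / n) - chiL N)| ≤
      Chebyshev.psi N / N := by
    rw [Chebyshev.psi, Nat.floor_natCast, sum_div]
    refine (abs_sum_le_sum_abs _ _).trans (sum_le_sum fun n hn => ?_)
    simp only [mem_Ioc] at hn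
    have hn0 : (0 : ℝ) < n := by exact_mod_cast hn.1
    have h4 := chiL_sub (N / n) N (Nat.div_le_self _ _)
    rw [abs_sub_comm] at h4
    have h5 : 1 / (((N / n : ℕ) : ℝ) + 1) ≤ n / N := by
      rw [div_le_div_iff₀ (by positivity) hNpos]
      have : N < n * (N / n + 1) := Nat.lt_mul_div_succ N hn.1
      have : (N : ℝ) < n * ((N / n : ℕ) + 1) := by exact_mod_cast this
      linarith
    rw [abs_mul, abs_div, abs_mul, abs_of_pos hn0, abs_of_nonneg vonMangoldt_nonneg]
    have hL : 0 ≤ vonMangoldt n := vonMangoldt_nonneg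
    calc |chi n| * vonMangoldt n / n * |chiL (N / n) - chiL N|
        ≤ 1 * vonMangoldt n / n * (n / N) := by
          gcongr
          · exact abs_chi_le n
          · exact h4.trans h5
      _ = _ := by field_simp
  have h4 : Chebyshev.psi N / N ≤ 8 := by
    rw [div_le_iff₀ hNpos]
    refine (Chebyshev.psi_le_const_mul_self hNpos.le).trans ?_
    have : Real.log 4 ≤ 3 := by linarith [Real.log_le_sub_one_of_pos (show (0:ℝ) < 4 by norm_num)]
    gcongr; linarith
  have h5 := chi_log_bound N
  have h6 : chiL N * ∑ d ∈ Ioc 0 N, chi d * vonMangoldt d / d =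
    ∑ n ∈ Ioc 0 N, chi n * (Real.log n / n) -
     ∑ n ∈ Ioc 0 N, (chi n * vonMangoldt n / n) * (chiL (N / n) - chiL N) := by
    rw [h1, ← sum_sub_distrib, mul_sum]
    refine sum_congr rfl fun n hn => ?_
    simp only [chiL]
    ring
  have h7 := chiL_ge N hN
  have h8 : |chiL N * ∑ d ∈ Ioc 0 N, chi d * vonMangoldt d / d| ≤ 10 := by
    rw [h6]
    refine (abs_sub _ _).trans ?_
    linarith
  rw [abs_mul, abs_of_pos (by linarith)] at h8
  have := abs_nonneg (∑ d ∈ Ioc 0 N, chi d * vonMangoldt d / d)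
  nlinarith

open Finset ArithmeticFunction in
theorem mertens_one (N : ℕ) (hN : 1 ≤ N) :
    |∑ d ∈ Ioc 0 N, vonMangoldt d / d - Real.log N| ≤ 10 := by
  have hNpos : (0 : ℝ) < N := by exact_mod_cast hN
  have h1 := conv_sum (fun d => vonMangoldt d) (fun m => 1) N
  have h2 : ∑ n ∈ Ioc 0 N, ∑ x ∈ n.divisorsAntidiagonal,
      (fun d : ℕ => vonMangoldt d) x.1 * (fun m : ℕ => (1 : ℝ)) x.2 =
      Real.log (N.factorial) := by
    clear h1
    simp only [mul_one]
    induction N, hN using Nat.le_induction with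
    | base => simp
    | succ k hk ih =>
      rw [sum_Ioc_succ_top (by omega), ih (by exact_mod_cast hk),
        Nat.sum_divisorsAntidiagonal (fun d _ => vonMangoldt d), vonMangoldt_sum,
        Nat.factorial_succ, Nat.cast_mul, Real.log_mul (by positivity) (by positivity)]
      ring
  rw [h2] at h1
  simp only [sum_const, Nat.card_Ioc, nsmul_eq_mul, mul_one, Nat.sub_zero] at h1
  have h4 : Chebyshev.psi N ≤ 8 * N := by
    refine (Chebyshev.psi_le_const_mul_self hNpos.le).trans ?_
    have : Real.log 4 ≤ 3 := by linarith [Real.log_le_sub_one_of_pos (show (0:ℝ) < 4 by norm_num)]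
    gcongr; linarith
  have h5 : Real.log N.factorial ≤ N * ∑ d ∈ Ioc 0 N, vonMangoldt d / d := by
    rw [h1, mul_sum]
    refine sum_le_sum fun n hn => ?_
    have hL : 0 ≤ vonMangoldt n := vonMangoldt_nonneg
    calc _ ≤ vonMangoldt n * ((N : ℝ) / n) := by gcongr; exact Nat.cast_div_le
      _ = _ := by ring
  have h6 : N * ∑ d ∈ Ioc 0 N, vonMangoldt d / d ≤ Real.log N.factorial + Chebyshev.psi N := by
    rw [h1, mul_sum, Chebyshev.psi, Nat.floor_natCast, ← sum_add_distrib]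
    refine sum_le_sum fun n hn => ?_
    have hL : 0 ≤ vonMangoldt n := vonMangoldt_nonneg
    simp only [mem_Ioc] at hn
    have hn0 : (0 : ℝ) < n := by exact_mod_cast hn.1
    have : N < n * (N / n + 1) := Nat.lt_mul_div_succ N hn.1
    have : (N : ℝ) < n * ((N / n : ℕ) + 1) := by exact_mod_cast this
    have h7 : (N : ℝ) / n ≤ (N / n : ℕ) + 1 := by
      rw [div_le_iff₀ hn0]; linarith
    calc _ = vonMangoldt n * ((N : ℝ) / n) := by ring
      _ ≤ vonMangoldt n * ((N / n : ℕ) + 1) := by gcongr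
      _ = _ := by ring
  have h7 : Real.log N.factorial ≤ N * Real.log N := by
    rw [← Real.log_pow]
    apply Real.log_le_log (by positivity)
    exact_mod_cast Nat.factorial_le_pow N
  have h8 : N * Real.log N - N ≤ Real.log N.factorial := by
    have h := Stirling.le_log_factorial_stirling (n := N) (by omega)
    have h9 : 0 ≤ Real.log N := Real.log_natCast_nonneg N
    have h10 : 0 ≤ Real.log (2 * Real.pi) := Real.log_nonneg (by nlinarith [Real.pi_gt_three])
    linarith
  rw [abs_le]
  constructor
  · by_contra! h
    nlinarith
  · by_contra! h
    nlinarith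

open Finset ArithmeticFunction in
theorem three_part (N : ℕ) : ∑ d ∈ Ioc 0 N with d % 3 = 0, vonMangoldt d / d ≤ 3 := by
  have hlog : Real.log 3 ≤ 2 := by
    linarith [Real.log_le_sub_one_of_pos (show (0:ℝ) < 3 by norm_num)]
  have h1 : ∑ d ∈ Ioc 0 N with d % 3 = 0, vonMangoldt d / d ≤
      ∑ d ∈ (range (N + 1)).image (fun k => 3 ^ k), vonMangoldt d / d := by
    have hnn : ∀ d : ℕ, 0 ≤ vonMangoldt d / d := fun d => div_nonneg vonMangoldt_nonneg (by positivity)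
    rw [← sum_filter_ne_zero]
    refine sum_le_sum_of_subset_of_nonneg ?_ fun d _ _ => hnn d
    intro d hd'
    obtain ⟨hd, h0⟩ := mem_filter.1 hd'
    simp only [mem_filter, mem_Ioc] at hd
    have h2 : vonMangoldt d ≠ 0 := fun h => h0 (by simp [h])
    rw [vonMangoldt_ne_zero_iff, isPrimePow_nat_iff] at h2
    obtain ⟨p, k, hp, hk, rfl⟩ := h2
    have h3 : 3 ∣ p := Nat.prime_three.dvd_of_dvd_pow (Nat.dvd_of_mod_eq_zero hd.2)
    have h4 : p = 3 := ((Nat.prime_dvd_prime_iff_eq Nat.prime_three hp).1 h3).symm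
    subst h4
    simp only [mem_image, mem_range]
    exact ⟨k, by have := Nat.lt_pow_self (n := k) (show 1 < 3 by norm_num); omega, rfl⟩
  refine h1.trans ?_
  rw [sum_image (fun a _ b _ h => Nat.pow_right_injective (le_refl 2 |>.trans (by norm_num)) h)]
  have h2 : ∀ k ∈ range (N + 1), vonMangoldt (3 ^ k) / ((3 ^ k : ℕ) : ℝ) ≤ 2 * (1 / 3) ^ k := by
    intro k _
    have : vonMangoldt (3 ^ k) ≤ 2 := by
      rcases Nat.eq_zero_or_pos k with rfl | hk
      · simp
      · rw [vonMangoldt_apply_pow (by omega), vonMangoldt_apply_prime Nat.prime_three]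
        exact_mod_cast hlog
    push_cast
    rw [one_div, inv_pow, ← div_eq_mul_inv]
    gcongr
  refine (sum_le_sum h2).trans ?_
  rw [← mul_sum, geom_sum_eq (by norm_num)]
  have : (0 : ℝ) ≤ (1 / 3) ^ (N + 1) := by positivity
  generalize ((1 : ℝ) / 3) ^ (N + 1) = t at *
  have e : 2 * ((t - 1) / (1 / 3 - 1)) = 3 - 3 * t := by ring
  linarith

open Finset ArithmeticFunction in
theorem mertens_two (N : ℕ) (hN : 1 ≤ N) :
    |∑ d ∈ Ioc 0 N with d % 3 = 2, vonMangoldt d / d - Real.log N / 2| ≤ 40 := by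
  have h1 := mertens_one N hN
  have h2 := mertens_chi N hN
  have h3 := three_part N
  have h4 : 0 ≤ ∑ d ∈ Ioc 0 N with d % 3 = 0, vonMangoldt d / d :=
    sum_nonneg fun d _ => div_nonneg vonMangoldt_nonneg (by positivity)
  have h5 : ∑ d ∈ Ioc 0 N with d % 3 = 2, vonMangoldt d / d =
      (∑ d ∈ Ioc 0 N, vonMangoldt d / d - ∑ d ∈ Ioc 0 N, chi d * vonMangoldt d / d
        - ∑ d ∈ Ioc 0 N with d % 3 = 0, vonMangoldt d / d) / 2 := by
    rw [sum_filter, sum_filter, ← sum_sub_distrib, ← sum_sub_distrib, sum_div]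
    refine sum_congr rfl fun d _ => ?_
    unfold chi
    have : d % 3 < 3 := Nat.mod_lt _ (by norm_num)
    generalize d % 3 = a at *
    interval_cases a <;> norm_num
    ring
  rw [h5]
  rw [abs_le] at *
  constructor <;> linarith

open Finset ArithmeticFunction in
theorem psi_two : ∃ c : ℝ, 0 < c ∧ ∃ N₀ : ℕ, ∀ N ≥ N₀,
    c * N ≤ ∑ d ∈ Ioc 0 N with d % 3 = 2, vonMangoldt d := by
  obtain ⟨K, hK⟩ := exists_nat_ge (Real.exp 162)
  have hK0 : (0 : ℝ) < K := lt_of_lt_of_le (Real.exp_pos _) hK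
  have hK1 : 0 < K := by exact_mod_cast hK0
  refine ⟨1 / K, by positivity, K, fun N hN => ?_⟩
  have hNpos : (0 : ℝ) < N := by exact_mod_cast (by omega : 0 < N)
  have hM : 1 ≤ N / K := Nat.div_pos hN hK1
  have hM0 : (0 : ℝ) < (N / K : ℕ) := by exact_mod_cast hM
  have h1 := mertens_two N (by omega)
  have h2 := mertens_two (N / K) hM
  have h3 : Real.log ((N / K : ℕ) : ℝ) ≤ Real.log N - 162 := by
    have : ((N / K : ℕ) : ℝ) ≤ N / K := Nat.cast_div_le
    have h4 := Real.log_le_log hM0 this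
    rw [Real.log_div (by positivity) (by positivity)] at h4
    have := (Real.le_log_iff_exp_le hK0).2 hK
    linarith
  have h4 : ∑ d ∈ Ioc 0 N with d % 3 = 2, vonMangoldt d / d -
      ∑ d ∈ Ioc 0 (N / K) with d % 3 = 2, vonMangoldt d / d ≤
      (K / N) * ∑ d ∈ Ioc 0 N with d % 3 = 2, vonMangoldt d := by
    have hle : N / K ≤ N := Nat.div_le_self _ _
    simp only [sum_filter]
    rw [← sum_Ioc_consecutive _ (Nat.zero_le (N / K)) hle, add_sub_cancel_left,
      ← sum_Ioc_consecutive _ (Nat.zero_le (N / K)) hle, mul_add]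
    have : 0 ≤ (K / N : ℝ) * ∑ d ∈ Ioc 0 (N / K), if d % 3 = 2 then vonMangoldt d else 0 := by
      refine mul_nonneg (by positivity) (sum_nonneg fun d _ => ?_)
      split_ifs
      · exact vonMangoldt_nonneg
      · exact le_rfl
    refine le_trans ?_ (le_add_of_nonneg_left this)
    rw [mul_sum]
    refine sum_le_sum fun d hd => ?_
    simp only [mem_Ioc] at hd
    split_ifs
    · have hd0 : (0 : ℝ) < d := by exact_mod_cast (by omega : 0 < d)
      have hL : 0 ≤ vonMangoldt d := vonMangoldt_nonneg
      have : N < d * K := (Nat.div_lt_iff_lt_mul hK1).1 hd.1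
      have : (N : ℝ) < d * K := by exact_mod_cast this
      rw [div_mul_eq_mul_div, div_le_div_iff₀ hd0 hNpos]
      nlinarith
    · simp
  have h5 : 1 ≤ (K / N) * ∑ d ∈ Ioc 0 N with d % 3 = 2, vonMangoldt d := by
    rw [abs_le] at *
    linarith
  rw [div_mul_eq_mul_div, le_div_iff₀ hNpos] at h5
  rw [div_mul_eq_mul_div, div_le_iff₀ hK0]
  linarith

/-- The primes we use. -/
def Pr (p : ℕ) : Prop := p.Prime ∧ p % 3 = 2 ∧ 11 < p

open Finset ArithmeticFunction Classical in
theorem theta_two : ∃ c : ℝ, 0 < c ∧ ∃ N₀ : ℕ, ∀ N ≥ N₀,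
    c * N ≤ ∑ p ∈ Ioc 0 N with Pr p, Real.log p := by
  obtain ⟨c, hc, N₀, h⟩ := psi_two
  obtain ⟨C, hC⟩ := Chebyshev.psi_sub_theta_le_mul_sqrt
  set D := |C| + Chebyshev.psi 11 with hD
  have hD0 : 0 ≤ D := add_nonneg (abs_nonneg _) (Chebyshev.psi_nonneg _)
  obtain ⟨N₁, hN₁⟩ := exists_nat_ge ((2 * D / c) ^ 2)
  refine ⟨c / 2, by positivity, max N₀ (max N₁ 11), fun N hN => ?_⟩
  have hN0 : N₀ ≤ N := (le_max_left _ _).trans hN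
  have hN1 : N₁ ≤ N := (le_max_left _ _).trans ((le_max_right _ _).trans hN)
  have hN2 : 11 ≤ N := (le_max_right _ _).trans ((le_max_right _ _).trans hN)
  have h1 := h N hN0
  have h2 : ∑ d ∈ Ioc 0 N with d % 3 = 2, vonMangoldt d ≤
      ∑ p ∈ Ioc 0 N with Pr p, Real.log p + ∑ n ∈ Ioc 0 N with ¬n.Prime, vonMangoldt n +
        ∑ n ∈ Ioc 0 N with n ≤ 11, vonMangoldt n := by
    simp only [sum_filter]
    rw [← sum_add_distrib, ← sum_add_distrib]
    refine sum_le_sum fun d hd => ?_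
    have hL : 0 ≤ vonMangoldt d := vonMangoldt_nonneg
    have hl : 0 ≤ Real.log d := Real.log_natCast_nonneg d
    have e1 : 0 ≤ if Pr d then Real.log d else 0 := by split_ifs <;> first | assumption | rfl
    have e2 : 0 ≤ if ¬ d.Prime then vonMangoldt d else 0 := by
      split_ifs <;> first | assumption | rfl
    have e3 : 0 ≤ if d ≤ 11 then vonMangoldt d else 0 := by
      split_ifs <;> first | assumption | rfl
    by_cases h3 : d % 3 = 2
    · rw [if_pos h3]
      by_cases hp : d.Prime
      · by_cases h11 : d ≤ 11
        · rw [if_pos h11]; linarith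
        · have h12 : Pr d := ⟨hp, h3, by omega⟩
          have := vonMangoldt_apply_prime hp
          rw [if_pos h12]; linarith
      · rw [if_pos hp]; linarith
    · rw [if_neg h3]; linarith
  have h3 : ∑ n ∈ Ioc 0 N with n ≤ 11, vonMangoldt n = Chebyshev.psi 11 := by
    unfold Chebyshev.psi
    have : ⌊(11 : ℝ)⌋₊ = 11 := by norm_num
    rw [this]
    congr 1
    ext n; simp; omega
  have h4 := hC N
  rw [Chebyshev.psi_sub_theta_eq_sum_not_prime, Nat.floor_natCast] at h4
  have hs1 : 1 ≤ √(N : ℝ) := by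
    rw [Real.one_le_sqrt]; exact_mod_cast (by omega : 1 ≤ N)
  have h5 : C * √N ≤ |C| * √N := by gcongr; exact le_abs_self C
  have h6 : Chebyshev.psi 11 ≤ Chebyshev.psi 11 * √N :=
    le_mul_of_one_le_right (Chebyshev.psi_nonneg _) hs1
  have h7 : 2 * D / c ≤ √N := by
    apply Real.le_sqrt_of_sq_le
    exact hN₁.trans (by exact_mod_cast hN1)
  have h8 : D * √N ≤ c / 2 * N := by
    rw [div_le_iff₀ hc] at h7
    have h9 : √(N : ℝ) * √N = N := Real.mul_self_sqrt (by positivity)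
    nlinarith
  have h9 : D * √N = |C| * √N + Chebyshev.psi 11 * √N := by rw [hD]; ring
  linarith

/-- Positive integers all of whose prime factors satisfy `S`. -/
def Q (S : ℕ → Prop) (n : ℕ) : Prop := n ≠ 0 ∧ ∀ p, p.Prime → p ∣ n → S p

theorem Q_one (S : ℕ → Prop) : Q S 1 :=
  ⟨one_ne_zero, fun p hp h => absurd (Nat.dvd_one.1 h) hp.ne_one⟩

theorem Q_mul {S : ℕ → Prop} {m n : ℕ} (hm : Q S m) (hn : Q S n) : Q S (m * n) :=
  ⟨mul_ne_zero hm.1 hn.1, fun p hp h => (hp.dvd_mul.1 h).elim (hm.2 p hp) (hn.2 p hp)⟩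

theorem Q_dvd {S : ℕ → Prop} {m n : ℕ} (hn : Q S n) (h : m ∣ n) : Q S m :=
  ⟨fun h0 => hn.1 (by subst h0; exact Nat.eq_zero_of_zero_dvd h),
    fun p hp hpm => hn.2 p hp (hpm.trans h)⟩

theorem Q_prime {S : ℕ → Prop} {p : ℕ} (hp : p.Prime) (h : S p) : Q S p :=
  ⟨hp.ne_zero, fun q hq hqp => by rwa [(Nat.prime_dvd_prime_iff_eq hq hp).1 hqp]⟩

open Classical in
/-- Logarithmic sum over `Q S`. -/
noncomputable def H (S : ℕ → Prop) (N : ℕ) : ℝ :=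
  ∑ n ∈ Finset.Ioc 0 N with Q S n, 1 / (n : ℝ)

open Finset Classical in
theorem H_mono {S S' : ℕ → Prop} (h : ∀ p, p.Prime → S p → S' p) (N : ℕ) : H S N ≤ H S' N := by
  unfold H
  refine sum_le_sum_of_subset_of_nonneg ?_ fun n _ _ => by positivity
  intro n hn
  simp only [mem_filter] at hn ⊢
  exact ⟨hn.1, hn.2.1, fun p hp hpn => h p hp (hn.2.2 p hp hpn)⟩

theorem H_nonneg (S : ℕ → Prop) (N : ℕ) : 0 ≤ H S N := Finset.sum_nonneg fun n _ => by positivity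

open Finset Classical in
theorem H_strip (S : ℕ → Prop) (N p : ℕ) (hp : p.Prime) :
    (1 - 1 / (p : ℝ)) * H S N ≤ H (fun q => S q ∧ q ≠ p) N := by
  have h1 : H S N = ∑ n ∈ (Ioc 0 N).filter (Q S) with p ∣ n, 1 / (n : ℝ) +
      ∑ n ∈ (Ioc 0 N).filter (Q S) with ¬ p ∣ n, 1 / (n : ℝ) := by
    unfold H; rw [sum_filter_add_sum_filter_not]
  have h2 : ∑ n ∈ (Ioc 0 N).filter (Q S) with ¬ p ∣ n, 1 / (n : ℝ) ≤
      H (fun q => S q ∧ q ≠ p) N := by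
    unfold H
    refine sum_le_sum_of_subset_of_nonneg ?_ fun n _ _ => by positivity
    intro n hn
    simp only [mem_filter] at hn ⊢
    refine ⟨hn.1.1, hn.1.2.1, fun q hq hqn => ⟨hn.1.2.2 q hq hqn, ?_⟩⟩
    rintro rfl
    exact hn.2 hqn
  have h3 : ∑ n ∈ (Ioc 0 N).filter (Q S) with p ∣ n, 1 / (n : ℝ) ≤ 1 / p * H S N := by
    have : ∑ n ∈ (Ioc 0 N).filter (Q S) with p ∣ n, 1 / (n : ℝ) ≤
        ∑ n ∈ ((Ioc 0 N).filter (Q S)).image (fun m => p * m), 1 / (n : ℝ) := by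
      refine sum_le_sum_of_subset_of_nonneg ?_ fun n _ _ => by positivity
      intro n hn
      simp only [mem_filter, mem_image, mem_Ioc] at hn ⊢
      obtain ⟨⟨⟨h0, hN⟩, hQ⟩, m, rfl⟩ := hn
      refine ⟨m, ⟨⟨Nat.pos_of_mul_pos_left h0, ?_⟩, Q_dvd hQ (Dvd.intro_left p rfl)⟩, rfl⟩
      exact (Nat.le_mul_of_pos_left m hp.pos).trans hN
    refine this.trans (le_of_eq ?_)
    rw [sum_image (fun a _ b _ h => Nat.eq_of_mul_eq_mul_left hp.pos h)]
    unfold H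
    rw [mul_sum]
    refine sum_congr rfl fun n _ => ?_
    push_cast
    rw [one_div_mul_one_div]
  linarith

open Classical in
/-- The indicator of integers with all primes `2 mod 3`. -/
noncomputable def f2 (n : ℕ) : ℝ := if Q (fun p => p % 3 = 2) n then 1 else 0

theorem f2_nonneg (n : ℕ) : 0 ≤ f2 n := by unfold f2; split_ifs <;> norm_num

/-- `f2` as an arithmetic function. -/
noncomputable def f2A : ArithmeticFunction ℝ := ⟨f2, by simp [f2, Q]⟩
/-- `chi` as an arithmetic function. -/
noncomputable def chiA : ArithmeticFunction ℝ := ⟨chi, by simp [chi]⟩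

theorem f2A_mult : f2A.IsMultiplicative := by
  refine ⟨?_, ?_⟩
  · simp [f2A, f2, Q_one]
  · intro m n _
    simp only [f2A, ArithmeticFunction.coe_mk, f2]
    by_cases hm : Q (fun p => p % 3 = 2) m
    · by_cases hn : Q (fun p => p % 3 = 2) n
      · simp [hm, hn, Q_mul]
      · have : ¬ Q (fun p => p % 3 = 2) (m * n) := fun h => hn (Q_dvd h (Dvd.intro_left m rfl))
        simp [hn, this]
    · have : ¬ Q (fun p => p % 3 = 2) (m * n) := fun h => hm (Q_dvd h (Dvd.intro n rfl))
      simp [hm, this]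

theorem chiA_mult : chiA.IsMultiplicative := by
  refine ⟨?_, ?_⟩
  · simp [chiA, chi]
  · intro m n _
    simp only [chiA, ArithmeticFunction.coe_mk, chi_mul]

theorem chi_pow (p k : ℕ) : chi (p ^ k) = chi p ^ k := by
  induction k with
  | zero => simp [chi]
  | succ k ih => rw [pow_succ, chi_mul, ih, pow_succ]

open Finset in
theorem k_primepow (p k : ℕ) (hp : p.Prime) : 0 ≤ (f2A * chiA) (p ^ k) := by
  rw [ArithmeticFunction.mul_apply, Nat.sum_divisorsAntidiagonal (fun a b => f2A a * chiA b),
    Nat.sum_divisors_prime_pow hp]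
  simp only [f2A, chiA, ArithmeticFunction.coe_mk]
  have h0 : ∀ i ∈ range (k + 1), f2 (p ^ i) * chi (p ^ k / p ^ i) =
      f2 (p ^ i) * chi p ^ (k - i) := by
    intro i hi
    rw [Nat.pow_div (by simp at hi; omega) hp.pos, chi_pow]
  rw [sum_congr rfl h0]
  by_cases h : p % 3 = 2
  · have h1 : ∀ i ∈ range (k + 1), f2 (p ^ i) * chi p ^ (k - i) = (-1) ^ (k + 1 - 1 - i) := by
      intro i _
      have : Q (fun p => p % 3 = 2) (p ^ i) := by
        refine ⟨pow_ne_zero _ hp.ne_zero, fun q hq hqp => ?_⟩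
        rw [(Nat.prime_dvd_prime_iff_eq hq hp).1 (hq.dvd_of_dvd_pow hqp)]
        exact h
      simp [f2, this, chi, h]
    rw [sum_congr rfl h1, sum_range_reflect (fun j => (-1 : ℝ) ^ j), neg_one_geom_sum]
    split_ifs <;> norm_num
  · refine sum_nonneg fun i _ => mul_nonneg (f2_nonneg _) (pow_nonneg ?_ _)
    unfold chi
    split_ifs <;> norm_num

theorem k_nonneg (n : ℕ) : 0 ≤ (f2A * chiA) n := by
  rcases eq_or_ne n 0 with rfl | hn
  · simp
  rw [(f2A_mult.mul chiA_mult).multiplicative_factorization _ hn]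
  refine Finset.prod_nonneg fun p hp => k_primepow p _ ?_
  exact Nat.prime_of_mem_primeFactors (by simpa using hp)

theorem Q1_mod (b : ℕ) : Q (fun p => p % 3 = 1) b → b % 3 = 1 := by
  induction b using induction_on_primes with
  | zero => intro h; exact absurd rfl h.1
  | one => simp
  | prime_mul p b hp ih =>
    intro h
    rw [Nat.mul_mod, ih (Q_dvd h (Dvd.intro_left p rfl)), h.2 p hp (Dvd.intro b rfl)]

theorem decomp (n : ℕ) : Q (fun p => p ≠ 3) n → ∃ a b, a * b = n ∧ Q (fun p => p % 3 = 2) a ∧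
    Q (fun p => p % 3 = 1) b := by
  induction n using induction_on_primes with
  | zero => intro h; exact absurd rfl h.1
  | one => intro _; exact ⟨1, 1, rfl, Q_one _, Q_one _⟩
  | prime_mul p n hp ih =>
    intro h
    obtain ⟨a, b, rfl, ha, hb⟩ := ih (Q_dvd h (Dvd.intro_left p rfl))
    have h3 := h.2 p hp (Dvd.intro _ rfl)
    have h0 : p % 3 ≠ 0 := fun h => h3 ((Nat.prime_dvd_prime_iff_eq Nat.prime_three hp).1
      (Nat.dvd_of_mod_eq_zero h)).symm
    rcases (by omega : p % 3 = 1 ∨ p % 3 = 2) with h1 | h1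
    · exact ⟨a, p * b, by ring, ha, Q_mul (Q_prime hp h1) hb⟩
    · exact ⟨p * a, b, by ring, Q_mul (Q_prime hp h1) ha, hb⟩

theorem k_ge_one (b : ℕ) (hb : Q (fun p => p % 3 = 1) b) : 1 ≤ (f2A * chiA) b := by
  rw [ArithmeticFunction.mul_apply]
  have h : f2A 1 * chiA b = 1 := by
    simp [f2A, chiA, f2, Q_one, chi, Q1_mod b hb]
  rw [← h]
  refine Finset.single_le_sum (f := fun x : ℕ × ℕ => f2A x.1 * chiA x.2)
    (a := (1, b)) (fun x hx => ?_) (by simp [hb.1])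
  have h1 := (Nat.mem_divisorsAntidiagonal.1 hx).1
  have h2 := Q1_mod x.2 (Q_dvd hb ⟨x.1, by rw [← h1, mul_comm]⟩)
  have : chiA x.2 = 1 := by simp [chiA, chi, h2]
  rw [this, mul_one]
  exact f2_nonneg _

open Finset Classical in
theorem H_eq_f2 (N : ℕ) : H (fun p => p % 3 = 2) N = ∑ n ∈ Ioc 0 N, f2 n / n := by
  unfold H f2
  rw [sum_filter]
  refine sum_congr rfl fun n _ => ?_
  split_ifs <;> simp

open Finset Classical in
theorem H_sq_aux (N : ℕ) : H (fun p => p ≠ 3) N ≤ H (fun p => p % 3 = 2) N ^ 2 := by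
  have hK : ∑ m ∈ Ioc 0 N, (f2A * chiA) m / m ≤ H (fun p => p % 3 = 2) N := by
    have h1 := conv_sum (fun n => f2 n / n) (fun m => chi m * (1 / (m : ℝ))) N
    have h2 : ∑ m ∈ Ioc 0 N, (f2A * chiA) m / m =
        ∑ n ∈ Ioc 0 N, f2 n / n * ∑ m ∈ Ioc 0 (N / n), chi m * (1 / (m : ℝ)) := by
      rw [← h1]
      refine sum_congr rfl fun n _ => ?_
      rw [ArithmeticFunction.mul_apply, sum_div]
      refine sum_congr rfl fun x hx => ?_
      rw [← (Nat.mem_divisorsAntidiagonal.1 hx).1]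
      simp only [f2A, chiA, ArithmeticFunction.coe_mk]
      push_cast
      simp only [div_eq_mul_inv, mul_inv]
      ring
    rw [h2, H_eq_f2]
    refine sum_le_sum fun n _ => ?_
    refine mul_le_of_le_one_right (div_nonneg (f2_nonneg _) (by positivity)) (chiL_le _)
  have hH := H_nonneg (fun p => p % 3 = 2) N
  have hkn : ∀ m : ℕ, 0 ≤ (f2A * chiA) m / m := fun m => div_nonneg (k_nonneg _) (by positivity)
  have h1 := conv_sum (fun n => f2 n / n) (fun m => (f2A * chiA) m / m) N
  have h2 : H (fun p => p ≠ 3) N ≤ ∑ n ∈ Ioc 0 N, ∑ x ∈ n.divisorsAntidiagonal,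
      (f2 x.1 / x.1) * ((f2A * chiA) x.2 / x.2) := by
    have hnn : ∀ x : ℕ × ℕ, 0 ≤ (f2 x.1 / x.1) * ((f2A * chiA) x.2 / x.2) := fun x =>
      mul_nonneg (div_nonneg (f2_nonneg _) (by positivity)) (hkn _)
    unfold H
    rw [sum_filter]
    refine sum_le_sum fun n _ => ?_
    split_ifs with hQ
    · obtain ⟨a, b, rfl, ha, hb⟩ := decomp n hQ
      refine le_trans ?_ (single_le_sum
        (f := fun x : ℕ × ℕ => (f2 x.1 / x.1) * ((f2A * chiA) x.2 / x.2))
        (a := (a, b)) (fun x _ => hnn x) (by simp [ha.1, hb.1]))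
      have h3 := k_ge_one b hb
      have h4 : f2 a = 1 := by simp [f2, ha]
      simp only [h4]
      push_cast
      rw [← one_div_mul_one_div]
      gcongr
    · exact sum_nonneg fun x _ => hnn x
  refine h2.trans (h1.trans_le ?_)
  rw [sq]
  nth_rewrite 1 [H_eq_f2]
  rw [sum_mul]
  refine sum_le_sum fun n _ => ?_
  refine mul_le_mul_of_nonneg_left (le_trans ?_ hK) (div_nonneg (f2_nonneg _) (by positivity))
  exact sum_le_sum_of_subset_of_nonneg (Ioc_subset_Ioc_right (Nat.div_le_self _ _))
    fun m _ _ => hkn m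

open Classical in
theorem H_lower (N : ℕ) : Real.log (N + 1) / 12 ≤ H Pr N ^ 2 := by
  have h1 : Real.log (N + 1) ≤ H (fun _ => True) N := by
    have := log_add_one_le_harmonic N
    rw [harmonic_eq_sum_Icc] at this
    push_cast at this
    refine this.trans (le_of_eq ?_)
    unfold H
    rw [Finset.filter_true_of_mem]
    · simp only [one_div]; rfl
    · intro n hn
      simp only [Finset.mem_Ioc] at hn
      exact ⟨by omega, fun _ _ _ => trivial⟩
  have h2 := H_strip (fun _ => True) N 3 Nat.prime_three
  simp only [true_and] at h2
  have h3 := H_sq_aux N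
  have h4 := H_strip (fun p => p % 3 = 2) N 2 Nat.prime_two
  have h5 := H_strip (fun q => q % 3 = 2 ∧ q ≠ 2) N 5 Nat.prime_five
  have h6 := H_strip (fun q => (q % 3 = 2 ∧ q ≠ 2) ∧ q ≠ 5) N 11 (by norm_num)
  have h7 : H (fun q => ((q % 3 = 2 ∧ q ≠ 2) ∧ q ≠ 5) ∧ q ≠ 11) N ≤ H Pr N := by
    refine H_mono (fun p hp h => ⟨hp, h.1.1.1, ?_⟩) N
    by_contra! h11
    have h8 : p ≠ 8 := by rintro rfl; norm_num at hp
    omega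
  norm_num at h2 h4 h5 h6
  have h0 := H_nonneg (fun p => p % 3 = 2) N
  have h8 : 4 / 11 * H (fun p => p % 3 = 2) N ≤ H Pr N := by
    norm_num at h7 h0 h3 ⊢
    linarith
  have h9 : (4 / 11 * H (fun p => p % 3 = 2) N) ^ 2 ≤ H Pr N ^ 2 := by
    gcongr
  rw [mul_pow] at h9
  have h10 := Real.log_nonneg (show (1 : ℝ) ≤ N + 1 by linarith [(Nat.cast_nonneg N : (0:ℝ) ≤ N)])
  norm_num at h9 h3
  linarith

open Classical in
/-- The integers up to `N` composed of the primes `Pr`. -/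
noncomputable def FS (N : ℕ) : Finset ℕ := (Finset.Ioc 0 N).filter (Q Pr)

theorem mem_FS {N n : ℕ} : n ∈ FS N ↔ n ≤ N ∧ Q Pr n := by
  unfold FS
  simp only [Finset.mem_filter, Finset.mem_Ioc]
  constructor
  · rintro ⟨⟨_, h⟩, h2⟩; exact ⟨h, h2⟩
  · rintro ⟨h, h2⟩; exact ⟨⟨Nat.pos_of_ne_zero h2.1, h⟩, h2⟩

theorem sum_primeFactors_log_le (b : ℕ) (hb : b ≠ 0) :
    ∑ p ∈ b.primeFactors, Real.log p ≤ Real.log b := by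
  rw [← Real.log_prod (fun p hp => by
    have := (Nat.prime_of_mem_primeFactors hp).ne_zero
    exact_mod_cast this)]
  apply Real.log_le_log
  · exact Finset.prod_pos fun p hp => by
      have := (Nat.prime_of_mem_primeFactors hp).pos
      exact_mod_cast this
  · have := Nat.le_of_dvd (Nat.pos_of_ne_zero hb) (Nat.prod_primeFactors_dvd b)
    rw [← Nat.cast_prod]
    exact Nat.cast_le.2 this

open Finset Classical in
theorem T_step1 (N a : ℕ) :
    ∑ n ∈ FS (Nat.sqrt N) with Nat.Coprime a n,
      ∑ p ∈ Ioc 0 (N / n) with Pr p ∧ ¬ p ∣ a, Real.log p ≤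
    (#{b ∈ FS N | Nat.Coprime a b} : ℝ) * Real.log N := by
  set T := {b ∈ FS N | Nat.Coprime a b} with hT
  set Y := {n ∈ FS (Nat.sqrt N) | Nat.Coprime a n} with hY
  have h1 : ∑ b ∈ T, ∑ p ∈ Ioc 0 N with Pr p ∧ p ∣ b, Real.log p ≤ (#T : ℝ) * Real.log N := by
    rw [← nsmul_eq_mul]
    refine sum_le_card_nsmul _ _ _ fun b hb => ?_
    have hb' := mem_FS.1 (mem_filter.1 hb).1
    have hb0 : (0 : ℝ) < b := by exact_mod_cast Nat.pos_of_ne_zero hb'.2.1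
    refine le_trans ?_ ((sum_primeFactors_log_le b hb'.2.1).trans
      (Real.log_le_log hb0 (by exact_mod_cast hb'.1)))
    refine sum_le_sum_of_subset_of_nonneg ?_ fun p _ _ => Real.log_natCast_nonneg p
    intro p hp
    simp only [mem_filter, mem_Ioc] at hp
    exact Nat.mem_primeFactors.2 ⟨hp.2.1.1, hp.2.2, hb'.2.1⟩
  refine le_trans ?_ h1
  have h2 : ∀ n ∈ Y, ∑ p ∈ Ioc 0 (N / n) with Pr p ∧ ¬ p ∣ a, Real.log p =
      ∑ p ∈ Ioc 0 N, if (Pr p ∧ ¬ p ∣ a) ∧ n * p ≤ N then Real.log p else 0 := by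
    intro n hn
    have hn0 : 0 < n := Nat.pos_of_ne_zero (mem_FS.1 (mem_filter.1 hn).1).2.1
    rw [← sum_filter]
    congr 1
    ext p
    simp only [mem_filter, mem_Ioc, Nat.le_div_iff_mul_le hn0]
    rw [mul_comm p n]
    constructor
    · rintro ⟨⟨h1, h2⟩, h3⟩
      exact ⟨⟨h1, (Nat.le_mul_of_pos_left p hn0).trans h2⟩, h3, h2⟩
    · rintro ⟨⟨h1, h2⟩, h3, h4⟩
      exact ⟨⟨h1, h4⟩, h3⟩
  rw [sum_congr rfl h2, sum_comm]
  simp only [sum_filter (s := Ioc 0 N)]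
  rw [sum_comm (s := T)]
  refine sum_le_sum fun p _ => ?_
  rw [← sum_filter, ← sum_filter, sum_const, sum_const, nsmul_eq_mul, nsmul_eq_mul]
  refine mul_le_mul_of_nonneg_right ?_ (Real.log_natCast_nonneg p)
  norm_cast
  by_cases hp : Pr p ∧ ¬ p ∣ a
  · refine card_le_card_of_injOn (fun n => n * p) ?_ ?_
    · intro n hn
      simp only [coe_filter, Set.mem_setOf_eq, hY, hT, mem_filter, mem_FS] at hn ⊢
      obtain ⟨⟨⟨h1, h2⟩, h3⟩, h4, h5⟩ := hn
      refine ⟨⟨⟨h5, Q_mul h2 (Q_prime hp.1.1 hp.1)⟩, Nat.Coprime.mul_right h3 ?_⟩, hp.1,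
        Dvd.intro_left n rfl⟩
      exact ((Nat.Prime.coprime_iff_not_dvd hp.1.1).2 hp.2).symm
    · intro m _ n _ h
      exact Nat.eq_of_mul_eq_mul_right hp.1.1.pos h
  · simp [hp]

open Finset Classical in
theorem T_lower : ∃ c : ℝ, 0 < c ∧ ∃ N₀ : ℕ, ∀ N ≥ N₀, ∀ a, a ≠ 0 → a ≤ N →
    c * N * ∑ n ∈ FS (Nat.sqrt N) with Nat.Coprime a n, 1 / (n : ℝ) ≤
    (#{b ∈ FS N | Nat.Coprime a b} : ℝ) * Real.log N := by
  obtain ⟨c, hc, N₀, h⟩ := theta_two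
  have hlog : ∀ᶠ N : ℕ in Filter.atTop, Real.log N ≤ c / 4 * (N : ℝ) ^ (1 / 2 : ℝ) := by
    have h1 := (isLittleO_log_rpow_atTop (r := 1 / 2) (by norm_num)).bound
      (show (0 : ℝ) < c / 4 by positivity)
    have h2 := tendsto_natCast_atTop_atTop (R := ℝ) |>.eventually h1
    filter_upwards [h2] with N hN
    rw [Real.norm_eq_abs, Real.norm_eq_abs, abs_of_nonneg (by positivity : (0:ℝ) ≤ (N:ℝ) ^ (1/2:ℝ))] at hN
    exact (le_abs_self _).trans hN
  obtain ⟨N₁, hN₁⟩ := Filter.eventually_atTop.1 hlog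
  refine ⟨c / 4, by positivity, max (N₀ ^ 2) N₁, fun N hN a ha haN => ?_⟩
  refine le_trans ?_ (T_step1 N a)
  rw [mul_sum]
  refine sum_le_sum fun n hn => ?_
  have hn' := mem_FS.1 (mem_filter.1 hn).1
  have hnpos : 0 < n := Nat.pos_of_ne_zero hn'.2.1
  have hn0 : (0 : ℝ) < n := by exact_mod_cast hnpos
  have hs : Nat.sqrt N ≤ N / n := by
    rw [Nat.le_div_iff_mul_le hnpos]
    exact (Nat.mul_le_mul_left _ hn'.1).trans (Nat.sqrt_le N)
  have hN0 : N₀ ≤ Nat.sqrt N := by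
    rw [Nat.le_sqrt']
    exact (le_max_left _ _).trans hN
  have h1 := h (N / n) (hN0.trans hs)
  have hnN : n ≤ N := hn'.1.trans (Nat.sqrt_le_self N)
  have h2 : (N : ℝ) / (2 * n) ≤ (N / n : ℕ) := by
    have h3 : 1 ≤ N / n := Nat.div_pos hnN hnpos
    have : N < n * (N / n + 1) := Nat.lt_mul_div_succ N hnpos
    have h4 : N ≤ 2 * n * (N / n) := by nlinarith
    have : (N : ℝ) ≤ 2 * n * (N / n : ℕ) := by exact_mod_cast h4
    rw [div_le_iff₀ (by positivity)]
    linarith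
  have h3 : Real.log a ≤ c / 4 * (N / n) := by
    have h4 := hN₁ N ((le_max_right _ _).trans hN)
    have h5 : Real.log a ≤ Real.log N :=
      Real.log_le_log (by exact_mod_cast Nat.pos_of_ne_zero ha) (by exact_mod_cast haN)
    refine h5.trans (h4.trans ?_)
    gcongr
    rw [← Real.sqrt_eq_rpow, le_div_iff₀ hn0]
    have h6 : (n : ℝ) ≤ √N := by
      apply Real.le_sqrt_of_sq_le
      have := Nat.le_sqrt'.1 hn'.1
      exact_mod_cast this
    calc √(N : ℝ) * n ≤ √N * √N := by gcongr
      _ = N := Real.mul_self_sqrt (by positivity)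
  have h4 : ∑ p ∈ Ioc 0 (N / n) with Pr p, Real.log p ≤
      ∑ p ∈ Ioc 0 (N / n) with Pr p ∧ ¬ p ∣ a, Real.log p + ∑ p ∈ a.primeFactors, Real.log p := by
    rw [← sum_filter_add_sum_filter_not _ (fun p => ¬ p ∣ a), filter_filter]
    refine add_le_add le_rfl ?_
    refine sum_le_sum_of_subset_of_nonneg ?_ fun p _ _ => Real.log_natCast_nonneg p
    intro p hp
    simp only [mem_filter, not_not] at hp
    exact Nat.mem_primeFactors.2 ⟨hp.1.2.1, hp.2, ha⟩
  have h5 := sum_primeFactors_log_le a ha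
  have h6 : c * (N / (2 * n)) ≤ c * (N / n : ℕ) := by gcongr
  have h7 : c * ((N : ℝ) / (2 * n)) = c / 4 * N * (1 / n) + c / 4 * (N / n) := by
    field_simp; ring
  linarith

open Finset Classical in
theorem cop_lower (y : ℕ) : H Pr y ^ 2 ≤
    2 * ∑ n ∈ FS y, ∑ m ∈ FS y with Nat.Coprime n m, 1 / (n : ℝ) * (1 / m) := by
  set C := ∑ n ∈ FS y, ∑ m ∈ FS y with Nat.Coprime n m, 1 / (n : ℝ) * (1 / m) with hC
  have hC0 : 0 ≤ C := sum_nonneg fun n _ => sum_nonneg fun m _ => by positivity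
  have hC' : C = ∑ x ∈ FS y ×ˢ FS y with Nat.Coprime x.1 x.2, 1 / (x.1 : ℝ) * (1 / x.2) := by
    rw [hC, sum_filter, sum_product]
    refine sum_congr rfl fun n _ => ?_
    rw [sum_filter]
  have h1 : H Pr y ^ 2 = ∑ x ∈ FS y ×ˢ FS y, 1 / (x.1 : ℝ) * (1 / x.2) := by
    rw [sq, H, sum_mul_sum, sum_product]; rfl
  have h2 : ∑ x ∈ FS y ×ˢ FS y, 1 / (x.1 : ℝ) * (1 / x.2) =
      ∑ g ∈ Ioc 0 y, ∑ x ∈ FS y ×ˢ FS y with Nat.gcd x.1 x.2 = g, 1 / (x.1 : ℝ) * (1 / x.2) := by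
    rw [sum_fiberwise_of_maps_to]
    intro x hx
    simp only [mem_product, mem_FS, mem_Ioc] at hx ⊢
    exact ⟨Nat.gcd_pos_of_pos_left _ (Nat.pos_of_ne_zero hx.1.2.1),
      (Nat.gcd_le_left _ (Nat.pos_of_ne_zero hx.1.2.1)).trans hx.1.1⟩
  have h3 : ∀ g ∈ Ioc 0 y, ∑ x ∈ FS y ×ˢ FS y with Nat.gcd x.1 x.2 = g,
      1 / (x.1 : ℝ) * (1 / x.2) ≤ 1 / (g : ℝ) ^ 2 * C := by
    intro g hg
    simp only [mem_Ioc] at hg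
    have h4 : ∑ x ∈ FS y ×ˢ FS y with Nat.gcd x.1 x.2 = g, 1 / (x.1 : ℝ) * (1 / x.2) ≤
        ∑ x ∈ ((FS y ×ˢ FS y).filter (fun x => Nat.Coprime x.1 x.2)).image
          (fun x => (g * x.1, g * x.2)), 1 / (x.1 : ℝ) * (1 / x.2) := by
      refine sum_le_sum_of_subset_of_nonneg ?_ fun x _ _ => by positivity
      rintro ⟨a, b⟩ hx
      simp only [mem_filter, mem_product, mem_FS, mem_image] at hx ⊢
      obtain ⟨⟨⟨ha, hQa⟩, hb, hQb⟩, hg'⟩ := hx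
      have hga : g ∣ a := hg' ▸ Nat.gcd_dvd_left a b
      have hgb : g ∣ b := hg' ▸ Nat.gcd_dvd_right a b
      refine ⟨(a / g, b / g), ⟨⟨⟨(Nat.div_le_self _ _).trans ha, Q_dvd hQa (Nat.div_dvd_of_dvd hga)⟩,
        (Nat.div_le_self _ _).trans hb, Q_dvd hQb (Nat.div_dvd_of_dvd hgb)⟩, ?_⟩, ?_⟩
      · have := Nat.coprime_div_gcd_div_gcd (m := a) (n := b) (by rw [hg']; exact hg.1)
        rwa [hg'] at this
      · simp [Nat.mul_div_cancel' hga, Nat.mul_div_cancel' hgb]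
    refine h4.trans (le_of_eq ?_)
    rw [sum_image, hC', mul_sum]
    · refine sum_congr rfl fun x _ => ?_
      push_cast
      simp only [one_div, mul_inv, inv_pow]
      ring
    · rintro ⟨a, b⟩ _ ⟨a', b'⟩ _ h
      simp only [Prod.mk.injEq] at h ⊢
      exact ⟨Nat.eq_of_mul_eq_mul_left hg.1 h.1, Nat.eq_of_mul_eq_mul_left hg.1 h.2⟩
  have h5 : ∑ g ∈ Ioc 0 y, 1 / (g : ℝ) ^ 2 ≤ 2 := by
    have key : ∀ k : ℕ, ∑ g ∈ Ioc 0 (k + 1), 1 / (g : ℝ) ^ 2 ≤ 2 - 1 / ((k : ℝ) + 1) := by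
      intro k
      induction k with
      | zero => norm_num
      | succ k ih =>
        rw [sum_Ioc_succ_top (by omega)]
        push_cast
        have : 1 / ((k : ℝ) + 1 + 1) ^ 2 ≤ 1 / ((k : ℝ) + 1) - 1 / ((k : ℝ) + 1 + 1) := by
          rw [div_sub_div _ _ (by positivity) (by positivity), div_le_div_iff₀ (by positivity) (by positivity)]
          nlinarith [(Nat.cast_nonneg k : (0 : ℝ) ≤ k)]
        linarith
    rcases y with _ | k
    · simp
    · have : (0 : ℝ) ≤ 1 / ((k : ℝ) + 1) := by positivity
      linarith [key k]
  rw [h1, h2]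
  refine (sum_le_sum h3).trans ?_
  rw [← sum_mul]
  gcongr

open Finset Classical in
theorem pairs_lower : ∃ c : ℝ, 0 < c ∧ ∃ N₀ : ℕ, 2 ≤ N₀ ∧ ∀ N ≥ N₀,
    c * N ^ 2 / Real.log N ≤ (#{x ∈ FS N ×ˢ FS N | Nat.Coprime x.1 x.2} : ℝ) := by
  obtain ⟨c, hc, N₀, h⟩ := T_lower
  refine ⟨c ^ 2 / 48, by positivity, max N₀ 2, le_max_right _ _, fun N hN => ?_⟩
  have hN0 : N₀ ≤ N := (le_max_left _ _).trans hN
  have hN2 : 2 ≤ N := (le_max_right _ _).trans hN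
  have hlog : 0 < Real.log N := Real.log_pos (by exact_mod_cast (by omega : 1 < N))
  set y := Nat.sqrt N with hy
  have hyN : y ≤ N := Nat.sqrt_le_self N
  set L := Real.log N with hL
  have e1 : (#{x ∈ FS N ×ˢ FS N | Nat.Coprime x.1 x.2} : ℝ) =
      ∑ a ∈ FS N, (#{b ∈ FS N | Nat.Coprime a b} : ℝ) := by
    rw [card_filter, sum_product]
    push_cast
    refine sum_congr rfl fun a _ => ?_
    rw [card_filter]
    push_cast
    rfl
  have e2 : c * N * ∑ a ∈ FS N, ∑ n ∈ FS y with Nat.Coprime a n, 1 / (n : ℝ) ≤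
      (#{x ∈ FS N ×ˢ FS N | Nat.Coprime x.1 x.2} : ℝ) * L := by
    rw [e1, mul_sum, sum_mul]
    exact sum_le_sum fun a ha => h N hN0 a (mem_FS.1 ha).2.1 (mem_FS.1 ha).1
  have e3 : ∑ a ∈ FS N, ∑ n ∈ FS y with Nat.Coprime a n, 1 / (n : ℝ) =
      ∑ n ∈ FS y, 1 / (n : ℝ) * (#{b ∈ FS N | Nat.Coprime n b} : ℝ) := by
    simp only [sum_filter]
    rw [sum_comm]
    refine sum_congr rfl fun n _ => ?_
    rw [← sum_filter, sum_const, nsmul_eq_mul, mul_comm]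
    simp only [Nat.coprime_comm]
  have e4 : c * N * ∑ n ∈ FS y, ∑ m ∈ FS y with Nat.Coprime n m, 1 / (n : ℝ) * (1 / m) ≤
      (∑ n ∈ FS y, 1 / (n : ℝ) * (#{b ∈ FS N | Nat.Coprime n b} : ℝ)) * L := by
    rw [mul_sum, sum_mul]
    refine sum_le_sum fun n hn => ?_
    have := h N hN0 n (mem_FS.1 hn).2.1 ((mem_FS.1 hn).1.trans hyN)
    rw [← mul_sum]
    calc _ = 1 / (n : ℝ) * (c * N * ∑ m ∈ FS y with Nat.Coprime n m, 1 / (m : ℝ)) := by ring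
      _ ≤ 1 / (n : ℝ) * ((#{b ∈ FS N | Nat.Coprime n b} : ℝ) * L) := by gcongr
      _ = _ := by ring
  have e5 := cop_lower y
  have e6 := H_lower y
  have e7 : L ≤ 2 * Real.log (y + 1) := by
    have : N < (y + 1) ^ 2 := Nat.lt_succ_sqrt' N
    have h1 : (N : ℝ) ≤ (y + 1) ^ 2 := by exact_mod_cast this.le
    have h2 := Real.log_le_log (by positivity) h1
    rw [Real.log_pow] at h2
    exact_mod_cast h2
  set X := ∑ n ∈ FS y, ∑ m ∈ FS y with Nat.Coprime n m, 1 / (n : ℝ) * (1 / m)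
  have e8 : L / 48 ≤ X := by linarith
  rw [e3] at e2
  set Z := ∑ n ∈ FS y, 1 / (n : ℝ) * (#{b ∈ FS N | Nat.Coprime n b} : ℝ)
  set P := (#{x ∈ FS N ×ˢ FS N | Nat.Coprime x.1 x.2} : ℝ)
  have hcN : 0 < c * N := by positivity
  have e9 : c * N * (L / 48) ≤ Z * L := (mul_le_mul_of_nonneg_left e8 hcN.le).trans e4
  have e10 : c * N / 48 ≤ Z := by
    have : c * N / 48 * L ≤ Z * L := by linarith
    exact le_of_mul_le_mul_right this hlog
  rw [div_le_iff₀ hlog]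
  calc c ^ 2 / 48 * N ^ 2 = c * N * (c * N / 48) := by ring
    _ ≤ c * N * Z := by gcongr
    _ ≤ P * L := e2

theorem Pr_mod (n : ℕ) (h : Q Pr n) : n % 2 ≠ 0 ∧ n % 3 ≠ 0 := by
  constructor
  · intro h0
    have := h.2 2 Nat.prime_two (Nat.dvd_of_mod_eq_zero h0)
    exact absurd this.2.2 (by norm_num)
  · intro h0
    have := h.2 3 Nat.prime_three (Nat.dvd_of_mod_eq_zero h0)
    exact absurd this.2.2 (by norm_num)

theorem exists_five (n : ℕ) (h : Q Pr n) : ∃ j < 6, n * 5 ^ j % 18 = 17 := by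
  obtain ⟨h2, h3⟩ := Pr_mod n h
  have key : ∀ r < 18, r % 2 ≠ 0 → r % 3 ≠ 0 → ∃ j < 6, r * 5 ^ j % 18 = 17 := by decide
  obtain ⟨j, hj, h⟩ := key (n % 18) (Nat.mod_lt _ (by norm_num)) (by omega) (by omega)
  exact ⟨j, hj, by rw [Nat.mul_mod] at h ⊢; simpa using h⟩

theorem exists_eleven (n : ℕ) (h : Q Pr n) : ∃ j < 6, n * 11 ^ j % 18 = 11 := by
  obtain ⟨h2, h3⟩ := Pr_mod n h
  have key : ∀ r < 18, r % 2 ≠ 0 → r % 3 ≠ 0 → ∃ j < 6, r * 11 ^ j % 18 = 11 := by decide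
  obtain ⟨j, hj, h⟩ := key (n % 18) (Nat.mod_lt _ (by norm_num)) (by omega) (by omega)
  exact ⟨j, hj, by rw [Nat.mul_mod] at h ⊢; simpa using h⟩

theorem Pr_coprime {n q : ℕ} (h : Q Pr n) (hq : q.Prime) (h11 : q ≤ 11) : Nat.Coprime n q := by
  refine ((Nat.Prime.coprime_iff_not_dvd hq).2 fun hd => ?_).symm
  exact absurd (h.2 q hq hd).2.2 (by omega)

/-- The number of pairs `(a,b)` of positive coprime integers at most `B`
with `a ≡ 17 (mod 18)`, `b ≡ 11 (mod 18)` and every prime dividing `ab` congruent to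
`2 (mod 3)` is at least `c·B²/log B` for large `B`. -/
theorem stmt_7 :
    ∃ c B₀ : ℝ, 0 < c ∧ 3 ≤ B₀ ∧ ∀ B : ℝ, B₀ ≤ B →
      c * B ^ 2 / Real.log B ≤
        ({ab : ℕ × ℕ | 0 < ab.1 ∧ 0 < ab.2 ∧ (ab.1 : ℝ) ≤ B ∧ (ab.2 : ℝ) ≤ B ∧
          Nat.Coprime ab.1 ab.2 ∧ ab.1 % 18 = 17 ∧ ab.2 % 18 = 11 ∧
          ∀ p : ℕ, p.Prime → p ∣ ab.1 * ab.2 → p % 3 = 2}.ncard : ℝ) := by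
  classical
  obtain ⟨c, hc, N₀, hN₀, h⟩ := pairs_lower
  set K : ℕ := 11 ^ 5 with hK
  have hK0 : (0 : ℝ) < K := by rw [hK]; positivity
  have hK1 : (1 : ℝ) ≤ K := by rw [hK]; norm_num
  refine ⟨c / (4 * K ^ 2 * 36), 3 + K * (N₀ + 1), by positivity, by
    have : (0 : ℝ) ≤ K * (N₀ + 1) := by positivity
    linarith, fun B hB => ?_⟩
  have hB0 : 3 ≤ B := by
    have : (0 : ℝ) ≤ K * (N₀ + 1) := by positivity
    linarith
  set S := {ab : ℕ × ℕ | 0 < ab.1 ∧ 0 < ab.2 ∧ (ab.1 : ℝ) ≤ B ∧ (ab.2 : ℝ) ≤ B ∧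
          Nat.Coprime ab.1 ab.2 ∧ ab.1 % 18 = 17 ∧ ab.2 % 18 = 11 ∧
          ∀ p : ℕ, p.Prime → p ∣ ab.1 * ab.2 → p % 3 = 2} with hS
  have hfin : S.Finite := by
    refine Set.Finite.subset ((Set.finite_Iic ⌊B⌋₊).prod (Set.finite_Iic ⌊B⌋₊)) ?_
    rintro ⟨a, b⟩ hab
    exact ⟨Nat.le_floor hab.2.2.1, Nat.le_floor hab.2.2.2.1⟩
  set N := ⌊B / K⌋₊ with hN
  have hNle : (N : ℝ) ≤ B / K := Nat.floor_le (by positivity)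
  have hBK : (N₀ : ℝ) + 1 ≤ B / K := by rw [le_div_iff₀ hK0]; linarith
  have hNge : N₀ ≤ N := Nat.le_floor (by linarith)
  have hNhalf : B / (2 * K) ≤ N := by
    have h1 : B / K < N + 1 := Nat.lt_floor_add_one _
    have h2 : (2 : ℝ) ≤ N₀ := by exact_mod_cast hN₀
    have h3 : B / (2 * K) = B / K / 2 := by field_simp
    rw [h3]; linarith
  have hmain := h N hNge
  have hcard : Finset.card {x ∈ FS N ×ˢ FS N | Nat.Coprime x.1 x.2} ≤ S.ncard * 36 := by
    rw [Set.ncard_eq_toFinset_card S hfin]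
    have e : hfin.toFinset.card * 36 =
        (hfin.toFinset ×ˢ (Finset.range 6 ×ˢ Finset.range 6)).card := by
      simp [Finset.card_product]
    rw [e]
    choose! j hj1 hj2 using exists_five
    choose! k hk1 hk2 using exists_eleven
    refine Finset.card_le_card_of_injOn
      (fun x => ((x.1 * 5 ^ j x.1, x.2 * 11 ^ k x.2), (j x.1, k x.2))) ?_ ?_
    · rintro ⟨a, b⟩ hx
      simp only [Finset.coe_filter, Finset.mem_product, mem_FS, Set.mem_setOf_eq] at hx
      obtain ⟨⟨⟨ha, hQa⟩, hb, hQb⟩, hab⟩ := hx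
      have hbd : ∀ n q i : ℕ, n ≤ N → 0 < q → q ≤ 11 → i < 6 → ((n * q ^ i : ℕ) : ℝ) ≤ B := by
        intro n q i hn hq0 hq hi
        have h1 : q ^ i ≤ K := by
          calc q ^ i ≤ 11 ^ i := Nat.pow_le_pow_left hq i
            _ ≤ 11 ^ 5 := Nat.pow_le_pow_right (by norm_num) (by omega)
        have h2 : ((n * q ^ i : ℕ) : ℝ) ≤ ((N * K : ℕ) : ℝ) := by
          exact_mod_cast Nat.mul_le_mul hn h1
        refine h2.trans ?_
        push_cast
        rwa [le_div_iff₀ hK0] at hNle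
      simp only [Finset.coe_product, Set.mem_prod, Finset.mem_coe, Set.Finite.mem_toFinset,
        Finset.mem_range]
      refine ⟨?_, hj1 a hQa, hk1 b hQb⟩
      have ha0 := Nat.pos_of_ne_zero hQa.1
      have hb0 := Nat.pos_of_ne_zero hQb.1
      refine ⟨by positivity, by positivity, hbd _ _ _ ha (by norm_num) (by norm_num) (hj1 a hQa),
        hbd _ _ _ hb (by norm_num) (by norm_num) (hk1 b hQb), ?_, hj2 a hQa, hk2 b hQb, ?_⟩
      · apply Nat.Coprime.mul_left
        · exact Nat.Coprime.mul_right hab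
            (Nat.Coprime.pow_right _ (Pr_coprime hQa (by norm_num) le_rfl))
        · apply Nat.Coprime.pow_left
          exact Nat.Coprime.mul_right (Pr_coprime hQb (by norm_num) (by norm_num)).symm
            (Nat.Coprime.pow_right _ (by norm_num))
      · intro p hp hd
        rcases hp.dvd_mul.1 hd with h1 | h1 <;> rcases hp.dvd_mul.1 h1 with h2 | h2
        · exact (hQa.2 p hp h2).2.1
        · rw [(Nat.prime_dvd_prime_iff_eq hp (by norm_num)).1 (hp.dvd_of_dvd_pow h2)]
        · exact (hQb.2 p hp h2).2.1
        · rw [(Nat.prime_dvd_prime_iff_eq hp (by norm_num)).1 (hp.dvd_of_dvd_pow h2)]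
    · rintro ⟨a, b⟩ _ ⟨a', b'⟩ _ hx
      simp only [Prod.mk.injEq] at hx ⊢
      obtain ⟨⟨h1, h2⟩, h3, h4⟩ := hx
      rw [h3] at h1
      rw [h4] at h2
      exact ⟨Nat.eq_of_mul_eq_mul_right (by positivity) h1,
        Nat.eq_of_mul_eq_mul_right (by positivity) h2⟩
  have hcard' : (Finset.card {x ∈ FS N ×ˢ FS N | Nat.Coprime x.1 x.2} : ℝ) ≤ S.ncard * 36 := by
    exact_mod_cast hcard
  have hN2 : (1 : ℝ) < N := by exact_mod_cast (by omega : 1 < N)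
  have hlogN : 0 < Real.log N := Real.log_pos hN2
  have hlogle : Real.log N ≤ Real.log B := by
    apply Real.log_le_log (by linarith)
    exact hNle.trans (div_le_self (by linarith) hK1)
  have hfinal : c * (B / (2 * K)) ^ 2 / Real.log B ≤ c * N ^ 2 / Real.log N := by
    gcongr
  have e : c / (4 * K ^ 2 * 36) * B ^ 2 / Real.log B =
      c * (B / (2 * K)) ^ 2 / Real.log B / 36 := by
    field_simp; norm_num
  rw [e, div_le_iff₀ (by norm_num)]
  linarith
end

section
/- There exist constants c₁, c₂ > 0 and x₀ ≥ 3 such that for all real x ≥ x₀, the number of positive integers n ≤ x all of whose prime factors are congruent to 5 modulo 6 lies between c₁·x/(log x)^{1/2} and c₂·x/(log x)^{1/2}. -/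
namespace S8
open Finset ArithmeticFunction
open scoped ArithmeticFunction.zeta

/-- All prime factors are `a` mod `6`. -/
def PF (a n : ℕ) : Prop := n ≠ 0 ∧ ∀ p : ℕ, p.Prime → p ∣ n → p % 6 = a

open Classical in
/-- Indicator of `PF a`. -/
noncomputable def fF (a : ℕ) : ArithmeticFunction ℝ :=
  ⟨fun n => if PF a n then 1 else 0, by simp [PF]⟩

/-- Nontrivial character mod 6. -/
noncomputable def chi : ArithmeticFunction ℝ :=
  ⟨fun n => if n % 6 = 1 then 1 else if n % 6 = 5 then -1 else 0, by simp⟩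

/-- Trivial character mod 6. -/
noncomputable def c0 : ArithmeticFunction ℝ :=
  ⟨fun n => if n % 6 = 1 then 1 else if n % 6 = 5 then 1 else 0, by simp⟩

/-- The weight `1/n`. -/
noncomputable def iv : ArithmeticFunction ℝ := ⟨fun n => 1 / (n : ℝ), by simp⟩

/-- Complete multiplicativity. -/
def CM (g : ArithmeticFunction ℝ) : Prop := g 1 = 1 ∧ ∀ m n, g (m * n) = g m * g n

lemma CM.mult {g : ArithmeticFunction ℝ} (h : CM g) : g.IsMultiplicative :=
  ⟨h.1, fun _ => h.2 _ _⟩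

lemma CM.pow {g : ArithmeticFunction ℝ} (h : CM g) (p k : ℕ) : g (p ^ k) = g p ^ k := by
  induction k with
  | zero => simp [h.1]
  | succ k ih => rw [pow_succ, h.2, ih, pow_succ]

lemma CM.pmul_mul {g : ArithmeticFunction ℝ} (h : CM g) (u v : ArithmeticFunction ℝ) :
    g.pmul (u * v) = g.pmul u * g.pmul v := by
  ext n
  simp only [pmul_apply, mul_apply, Finset.mul_sum]
  refine Finset.sum_congr rfl fun x hx => ?_
  rw [← (Nat.mem_divisorsAntidiagonal.1 hx).1, h.2]
  ring

lemma fF_apply (a n : ℕ) [Decidable (PF a n)] : fF a n = if PF a n then 1 else 0 := by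
  simp only [fF, coe_mk]; congr

lemma chi_apply (n : ℕ) : chi n = if n % 6 = 1 then 1 else if n % 6 = 5 then -1 else 0 := rfl
lemma c0_apply (n : ℕ) : c0 n = if n % 6 = 1 then 1 else if n % 6 = 5 then 1 else 0 := rfl
lemma iv_apply (n : ℕ) : iv n = 1 / (n : ℝ) := rfl

lemma PF_mul (a m n : ℕ) : PF a (m * n) ↔ PF a m ∧ PF a n := by
  constructor
  · rintro ⟨h, h2⟩
    have := mul_ne_zero_iff.1 h
    exact ⟨⟨this.1, fun p hp hd => h2 p hp (hd.mul_right _)⟩,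
      ⟨this.2, fun p hp hd => h2 p hp (hd.mul_left _)⟩⟩
  · rintro ⟨⟨h1, h2⟩, ⟨h3, h4⟩⟩
    refine ⟨mul_ne_zero h1 h3, fun p hp hd => ?_⟩
    rcases (hp.dvd_mul).1 hd with h | h
    · exact h2 p hp h
    · exact h4 p hp h

lemma PF_one (a : ℕ) : PF a 1 :=
  ⟨one_ne_zero, fun p hp hd => absurd (Nat.dvd_one.1 hd) hp.one_lt.ne'⟩

lemma PF_prime (a p : ℕ) (hp : p.Prime) : PF a p ↔ p % 6 = a := by
  constructor
  · rintro ⟨_, h⟩; exact h p hp dvd_rfl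
  · intro h
    exact ⟨hp.ne_zero, fun r hr hd => by rw [(Nat.prime_dvd_prime_iff_eq hr hp).1 hd]; exact h⟩

lemma cm_fF (a : ℕ) : CM (fF a) := by
  classical
  refine ⟨by simp [fF_apply, PF_one], fun m n => ?_⟩
  simp only [fF_apply, PF_mul]
  by_cases h1 : PF a m <;> by_cases h2 : PF a n <;> simp [h1, h2]

lemma cm_chi : CM chi := by
  refine ⟨by simp [chi_apply], fun m n => ?_⟩
  simp only [chi_apply, Nat.mul_mod m n 6]
  have h1 : m % 6 < 6 := Nat.mod_lt _ (by norm_num)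
  have h2 : n % 6 < 6 := Nat.mod_lt _ (by norm_num)
  generalize m % 6 = a at *
  generalize n % 6 = b at *
  interval_cases a <;> interval_cases b <;> norm_num

lemma cm_c0 : CM c0 := by
  refine ⟨by simp [c0_apply], fun m n => ?_⟩
  simp only [c0_apply, Nat.mul_mod m n 6]
  have h1 : m % 6 < 6 := Nat.mod_lt _ (by norm_num)
  have h2 : n % 6 < 6 := Nat.mod_lt _ (by norm_num)
  generalize m % 6 = a at *
  generalize n % 6 = b at *
  interval_cases a <;> interval_cases b <;> norm_num

lemma cm_iv : CM iv := by
  refine ⟨by simp [iv_apply], fun m n => ?_⟩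
  simp only [iv_apply]; push_cast; rw [one_div_mul_one_div]

lemma fF_prime (a p : ℕ) (hp : p.Prime) : fF a p = if p % 6 = a then 1 else 0 := by
  classical
  rw [fF_apply]; simp [PF_prime a p hp]

lemma fF_nonneg (a n : ℕ) : 0 ≤ fF a n := by
  classical
  rw [fF_apply]; split_ifs <;> norm_num

lemma fF_le (a n : ℕ) : fF a n ≤ 1 := by
  classical
  rw [fF_apply]; split_ifs <;> norm_num

lemma h_mul_f : fF 1 * fF 5 = c0 := by
  refine (IsMultiplicative.eq_iff_eq_on_prime_powers _ ((cm_fF 1).mult.mul (cm_fF 5).mult) _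
    cm_c0.mult).2 fun p k hp => ?_
  rcases Nat.eq_zero_or_pos k with rfl | hk
  · simp [cm_c0.1, ((cm_fF 1).mult.mul (cm_fF 5).mult).1]
  rw [mul_apply, Nat.sum_divisorsAntidiagonal (f := fun a b => fF 1 a * fF 5 b),
    Nat.sum_divisors_prime_pow hp]
  have key : ∀ i ∈ range (k + 1), fF 1 (p ^ i) * fF 5 (p ^ k / p ^ i)
      = fF 1 p ^ i * fF 5 p ^ (k - i) := by
    intro i hi
    rw [Nat.pow_div (by simp at hi; omega) hp.pos, (cm_fF 1).pow, (cm_fF 5).pow]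
  rw [Finset.sum_congr rfl key, cm_c0.pow, fF_prime _ _ hp, fF_prime _ _ hp, c0_apply]
  by_cases h1 : p % 6 = 1
  · simp only [h1]
    rw [Finset.sum_eq_single k]
    · simp
    · intro i hi hne
      simp at hi
      have : k - i ≠ 0 := by omega
      simp [this]
    · simp
  · by_cases h5 : p % 6 = 5
    · simp only [h5]
      rw [Finset.sum_eq_single 0]
      · simp
      · intro i hi hne
        simp [hne]
      · simp
    · simp only [h1, h5, if_false]
      rw [zero_pow hk.ne']
      refine Finset.sum_eq_zero fun i hi => ?_
      by_cases hi0 : i = 0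
      · subst hi0; simp [hk.ne']
      · simp [hi0]

lemma h_mod {n : ℕ} (h : PF 1 n) : n % 6 = 1 := by
  induction n using Nat.recOnMul with
  | zero => exact absurd rfl h.1
  | one => rfl
  | prime p hp => exact (PF_prime 1 p hp).1 h
  | mul a b ha hb =>
    have := (PF_mul _ _ _).1 h
    rw [Nat.mul_mod, ha this.1, hb this.2]

lemma chi_pmul_h : chi.pmul (fF 1) = fF 1 := by
  classical
  ext n
  rw [pmul_apply, fF_apply]
  by_cases h : PF 1 n
  · simp [h, chi_apply, h_mod h]
  · simp [h]

/-- The function `f * fχ`. -/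
noncomputable def qF : ArithmeticFunction ℝ := (fF 5) * chi.pmul (fF 5)

lemma chi_eq : chi = fF 1 * chi.pmul (fF 5) := by
  rw [← chi_pmul_h, ← cm_chi.pmul_mul, h_mul_f]
  ext n
  simp only [pmul_apply, chi_apply, c0_apply]
  split_ifs <;> norm_num

lemma ffchi : fF 5 * fF 5 * chi = c0 * qF := by
  rw [chi_eq, ← h_mul_f, qF]; ring

lemma c0chi : c0 * chi = fF 1 * fF 1 * qF := by
  rw [chi_eq, ← h_mul_f, qF]; ring

lemma qF_eq : qF = (fF 5).pmul ((ζ : ArithmeticFunction ℝ) * chi) := by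
  rw [(cm_fF 5).pmul_mul, qF]
  congr 1
  · ext n; by_cases h : n = 0 <;> simp [pmul_apply, h]
  · ext n; simp [pmul_apply, mul_comm]

lemma qF_mult : qF.IsMultiplicative :=
  (cm_fF 5).mult.mul (cm_chi.mult.pmul (cm_fF 5).mult)

lemma qF_pow (p k : ℕ) (hp : p.Prime) :
    (qF (p ^ k) = 1) ∨ (qF (p ^ k) = 0) := by
  rcases Nat.eq_zero_or_pos k with rfl | hk
  · left; simpa using qF_mult.1
  rw [qF_eq, pmul_apply, coe_zeta_mul_apply, Nat.sum_divisors_prime_pow hp, (cm_fF 5).pow,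
    fF_prime _ _ hp]
  by_cases h5 : p % 6 = 5
  · have : ∀ i ∈ range (k + 1), chi (p ^ i) = (-1) ^ i := by
      intro i _; rw [cm_chi.pow, chi_apply]; simp [h5]
    rw [Finset.sum_congr rfl this, neg_one_geom_sum]
    simp only [h5]
    split_ifs <;> simp
  · right; simp [h5, hk.ne']

lemma qF_pow_odd (p k : ℕ) (hp : p.Prime) (hk : Odd k) : qF (p ^ k) = 0 := by
  have hk0 : k ≠ 0 := by rintro rfl; simp at hk
  rw [qF_eq, pmul_apply, coe_zeta_mul_apply, Nat.sum_divisors_prime_pow hp, (cm_fF 5).pow,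
    fF_prime _ _ hp]
  by_cases h5 : p % 6 = 5
  · have : ∀ i ∈ range (k + 1), chi (p ^ i) = (-1) ^ i := by
      intro i _; rw [cm_chi.pow, chi_apply]; simp [h5]
    rw [Finset.sum_congr rfl this, neg_one_geom_sum]
    simp [hk.add_one]
  · simp [h5, hk0]

lemma qF_nonneg (n : ℕ) : 0 ≤ qF n := by
  rcases Nat.eq_zero_or_pos n with rfl | hn
  · simp
  rw [qF_mult.multiplicative_factorization _ hn.ne']
  refine Finset.prod_nonneg fun p hp => ?_
  rcases qF_pow p (n.factorization p) (Nat.prime_of_mem_primeFactors hp) with h | h <;> simp [h]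

lemma qF_le (n : ℕ) : qF n ≤ 1 := by
  rcases Nat.eq_zero_or_pos n with rfl | hn
  · simp
  rw [qF_mult.multiplicative_factorization _ hn.ne']
  refine Finset.prod_le_one (fun p hp => ?_) fun p hp => ?_
  · exact qF_nonneg _
  · rcases qF_pow p (n.factorization p) (Nat.prime_of_mem_primeFactors hp) with h | h <;> simp [h]

lemma qF_sq (n : ℕ) (h : ¬ IsSquare n) : qF n = 0 := by
  rcases Nat.eq_zero_or_pos n with rfl | hn
  · simp
  rw [qF_mult.multiplicative_factorization _ hn.ne']
  by_contra hne
  apply h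
  have hev : ∀ p ∈ n.primeFactors, Even (n.factorization p) := by
    intro p hp
    by_contra ho
    exact hne (Finset.prod_eq_zero hp (qF_pow_odd p _ (Nat.prime_of_mem_primeFactors hp)
      (Nat.not_even_iff_odd.1 ho)))
  refine ⟨∏ p ∈ n.primeFactors, p ^ (n.factorization p / 2), ?_⟩
  rw [← Finset.prod_mul_distrib]
  conv_lhs => rw [← Nat.prod_factorization_pow_eq_self hn.ne']
  refine Finset.prod_congr rfl fun p hp => ?_
  rw [← pow_add]
  congr 1
  have := hev p hp
  rw [Nat.even_iff] at this
  omega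

/-- Logarithmic partial sums. -/
noncomputable def G (u : ArithmeticFunction ℝ) (N : ℕ) : ℝ := ∑ n ∈ Ioc 0 N, u n / n

lemma G_mul (u v : ArithmeticFunction ℝ) (N : ℕ) :
    G (u * v) N = ∑ n ∈ Ioc 0 N, u n / n * G v (N / n) := by
  have h : ∀ (w : ArithmeticFunction ℝ) (n : ℕ), w n / n = iv.pmul w n := by
    intro w n; simp [pmul_apply, iv_apply]; ring
  simp only [G, h]
  rw [cm_iv.pmul_mul, sum_Ioc_mul_eq_sum_sum]

lemma G_nonneg {u : ArithmeticFunction ℝ} (hu : ∀ n, 0 ≤ u n) (N : ℕ) : 0 ≤ G u N :=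
  Finset.sum_nonneg fun n _ => div_nonneg (hu n) (Nat.cast_nonneg n)

lemma G_mono {u : ArithmeticFunction ℝ} (hu : ∀ n, 0 ≤ u n) {M N : ℕ} (h : M ≤ N) :
    G u M ≤ G u N :=
  Finset.sum_le_sum_of_subset_of_nonneg (Finset.Ioc_subset_Ioc_right h)
    fun n _ _ => div_nonneg (hu n) (Nat.cast_nonneg n)

lemma G_le {u v : ArithmeticFunction ℝ} (h : ∀ n, u n ≤ v n) (N : ℕ) : G u N ≤ G v N :=
  Finset.sum_le_sum fun n _ => div_le_div_of_nonneg_right (h n) (Nat.cast_nonneg n)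

lemma G_mul_le {u v : ArithmeticFunction ℝ} (hu : ∀ n, 0 ≤ u n) (hv : ∀ n, 0 ≤ v n) (N : ℕ) :
    G (u * v) N ≤ G u N * G v N := by
  rw [G_mul]
  conv_rhs => rw [G, Finset.sum_mul]
  exact Finset.sum_le_sum fun n _ => mul_le_mul_of_nonneg_left (G_mono hv (Nat.div_le_self _ _))
    (div_nonneg (hu n) (Nat.cast_nonneg n))

lemma le_G_mul {u v : ArithmeticFunction ℝ} (hu : ∀ n, 0 ≤ u n) (hv : ∀ n, 0 ≤ v n) (N : ℕ) :
    G u N * G v N ≤ G (u * v) (N * N) := by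
  rw [G_mul]
  conv_lhs => rw [G, Finset.sum_mul]
  refine le_trans (Finset.sum_le_sum fun n hn => mul_le_mul_of_nonneg_left
    (G_mono hv (N := N * N / n) ?_) (div_nonneg (hu n) (Nat.cast_nonneg n)))
    (Finset.sum_le_sum_of_subset_of_nonneg
      (Finset.Ioc_subset_Ioc_right (Nat.le_mul_self N)) fun n _ _ => mul_nonneg
        (div_nonneg (hu n) (Nat.cast_nonneg n)) (G_nonneg hv _))
  simp only [Finset.mem_Ioc] at hn
  rw [Nat.le_div_iff_mul_le hn.1]
  exact Nat.mul_le_mul_left _ hn.2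

/-- partial sums of `chi`. -/
noncomputable def A (n : ℕ) : ℝ := if n % 6 = 0 then 0 else if n % 6 = 5 then 0 else 1

lemma A_mem (n : ℕ) : A n = 0 ∨ A n = 1 := by
  unfold A; split_ifs <;> simp

lemma A_succ (n : ℕ) : A (n + 1) = A n + chi (n + 1) := by
  simp only [A, chi_apply]
  have h : n % 6 < 6 := Nat.mod_lt _ (by norm_num)
  rw [Nat.add_mod]
  generalize n % 6 = a at *
  interval_cases a <;> norm_num

lemma abel (a : ℕ → ℝ) (m n : ℕ) (hmn : m ≤ n) (h0 : ∀ k, 0 ≤ a k)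
    (ha : ∀ k, m ≤ k → a (k + 1) ≤ a k) :
    -(A m * a m) ≤ ∑ k ∈ Ioc m n, chi k * a k ∧
      ∑ k ∈ Ioc m n, chi k * a k ≤ (1 - A m) * a m := by
  suffices h : -(A m * a m) ≤ ∑ k ∈ Ioc m n, chi k * a k - A n * a n ∧
      ∑ k ∈ Ioc m n, chi k * a k - A n * a n ≤ (1 - A m) * a m - a n by
    have := h0 n
    rcases A_mem n with h' | h' <;> rw [h'] at h <;> constructor <;> linarith [h.1, h.2]
  induction n, hmn using Nat.le_induction with
  | base => constructor <;> linarith [show ∑ k ∈ Ioc m m, chi k * a k = 0 by simp]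
  | succ n hn ih =>
    rw [← Finset.sum_Ioc_consecutive _ hn (Nat.le_succ n)]
    have e : Ioc n (n + 1) = {n + 1} := by ext; simp
    have e2 := A_succ n
    have e3 := ha n hn
    rw [Nat.succ_eq_add_one, e, Finset.sum_singleton]
    rcases A_mem n with h' | h' <;> rw [h'] at ih e2 <;> rw [e2] <;> constructor <;> nlinarith

lemma abel_abs (a : ℕ → ℝ) (m n : ℕ) (hmn : m ≤ n) (h0 : ∀ k, 0 ≤ a k)
    (ha : ∀ k, m ≤ k → a (k + 1) ≤ a k) :
    |∑ k ∈ Ioc m n, chi k * a k| ≤ a m := by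
  have h := abel a m n hmn h0 ha
  have := h0 m
  rw [abs_le]
  rcases A_mem m with h' | h' <;> rw [h'] at h <;> constructor <;> linarith

lemma inv_anti (m : ℕ) (hm : 1 ≤ m) (k : ℕ) (hk : m ≤ k) :
    1 / ((k + 1 : ℕ) : ℝ) ≤ 1 / (k : ℝ) := by
  have : (0 : ℝ) < k := by exact_mod_cast (by omega : 0 < k)
  apply one_div_le_one_div_of_le this
  push_cast; linarith

lemma B_split (m n : ℕ) (h : m ≤ n) :
    G chi n = G chi m + ∑ k ∈ Ioc m n, chi k * (1 / (k : ℝ)) := by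
  rw [G, ← Finset.sum_Ioc_consecutive _ (Nat.zero_le m) h, G]
  congr 1
  exact Finset.sum_congr rfl fun _ _ => by ring

lemma B_one : G chi 1 = 1 := by
  have e : Ioc 0 1 = {1} := rfl
  simp [G, e, chi_apply]

lemma B_two : G chi 2 = 1 := by
  have e : Ioc 0 2 = {1, 2} := rfl
  simp [G, e, chi_apply]

lemma B_le (n : ℕ) : G chi n ≤ 1 := by
  rcases Nat.eq_zero_or_pos n with rfl | hn
  · simp [G]
  rw [B_split 1 n hn, B_one]
  have := (abel (fun k => 1 / (k : ℝ)) 1 n hn (fun _ => by positivity) (inv_anti 1 le_rfl)).2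
  simp only [A] at this
  norm_num at this ⊢
  exact this

lemma B_ge (n : ℕ) (hn : 1 ≤ n) : 1 / 2 ≤ G chi n := by
  rcases Nat.eq_or_lt_of_le hn with rfl | hn
  · rw [B_one]; norm_num
  rw [B_split 2 n hn, B_two]
  have := (abel (fun k => 1 / (k : ℝ)) 2 n hn (fun _ => by positivity)
    (inv_anti 2 (by norm_num))).1
  simp only [A] at this
  norm_num at this ⊢
  linarith

lemma B_tail (m n : ℕ) (hm : 1 ≤ m) (h : m ≤ n) : |G chi n - G chi m| ≤ 1 / m := by
  rw [B_split m n h, add_sub_cancel_left]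
  exact abel_abs (fun k => 1 / (k : ℝ)) m n h (fun _ => by positivity) (inv_anti m hm)

lemma harm_le (N : ℕ) : ∑ n ∈ Ioc 0 N, 1 / (n : ℝ) ≤ 1 + Real.log N := by
  have := harmonic_le_one_add_log N
  rw [harmonic_eq_sum_Icc] at this
  push_cast at this
  simp only [one_div]
  exact this

lemma le_harm (N : ℕ) : Real.log (N + 1) ≤ ∑ n ∈ Ioc 0 N, 1 / (n : ℝ) := by
  have := log_add_one_le_harmonic N
  rw [harmonic_eq_sum_Icc] at this
  push_cast at this
  simp only [one_div]
  exact this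

lemma c0_nonneg (n : ℕ) : 0 ≤ c0 n := by rw [c0_apply]; split_ifs <;> norm_num
lemma c0_le (n : ℕ) : c0 n ≤ 1 := by rw [c0_apply]; split_ifs <;> norm_num

lemma mul_nonneg' {u v : ArithmeticFunction ℝ} (hu : ∀ n, 0 ≤ u n) (hv : ∀ n, 0 ≤ v n) (n : ℕ) :
    0 ≤ (u * v) n := by
  rw [mul_apply]
  exact Finset.sum_nonneg fun x _ => mul_nonneg (hu _) (hv _)

lemma G_c0_le (N : ℕ) : G c0 N ≤ 1 + Real.log N :=
  le_trans (Finset.sum_le_sum fun n _ => div_le_div_of_nonneg_right (c0_le n) (Nat.cast_nonneg n))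
    (harm_le N)

lemma Gh_sq (N : ℕ) (hN : 1 ≤ N) : G (fF 1) N ^ 2 ≤ 1 + 2 * Real.log N := by
  have h1 := le_G_mul (fF_nonneg 1) (fF_nonneg 1) N
  have h2 : G (fF 1 * fF 1) (N * N) ≤ G (fF 1 * fF 1 * qF) (N * N) := by
    apply G_le
    intro n
    rcases Nat.eq_zero_or_pos n with rfl | hn
    · simp
    rw [mul_apply (f := fF 1 * fF 1) (g := qF)]
    have := Finset.single_le_sum (f := fun x : ℕ × ℕ => (fF 1 * fF 1) x.1 * qF x.2)
      (s := n.divisorsAntidiagonal)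
      (fun x _ => mul_nonneg (mul_nonneg' (fF_nonneg 1) (fF_nonneg 1) _) (qF_nonneg _))
      (a := (n, 1)) (by simp [hn.ne'])
    simpa [qF_mult.1] using this
  rw [← c0chi, G_mul c0 chi] at h2
  have h3 : ∑ n ∈ Ioc 0 (N * N), c0 n / n * G chi (N * N / n) ≤ G c0 (N * N) := by
    refine Finset.sum_le_sum fun n _ => ?_
    have := div_nonneg (c0_nonneg n) (Nat.cast_nonneg n)
    nlinarith [B_le (N * N / n)]
  have h4 := G_c0_le (N * N)
  have : (N : ℝ) ≠ 0 := by positivity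
  rw [Nat.cast_mul, Real.log_mul this this] at h4
  nlinarith

lemma Gq_le (N : ℕ) : G qF N ≤ 2 := by
  have h1 : G qF N ≤ ∑ k ∈ Ioc 0 N, 1 / ((k : ℝ) ^ 2) := by
    rw [G]
    have e : ∑ k ∈ Ioc 0 N, 1 / ((k : ℝ) ^ 2) =
        ∑ n ∈ (Ioc 0 N).image (fun k : ℕ => k * k), 1 / (n : ℝ) := by
      rw [Finset.sum_image]
      · exact Finset.sum_congr rfl fun k _ => by push_cast; rw [sq]
      · intro a _ b _ h
        simpa using Nat.mul_self_inj.1 h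
    rw [e]
    rw [← Finset.sum_filter_add_sum_filter_not (Ioc 0 N) (fun n => IsSquare n)]
    rw [Finset.sum_eq_zero (s := (Ioc 0 N).filter (fun n => ¬ IsSquare n)), add_zero]
    · refine le_trans (Finset.sum_le_sum (g := fun n : ℕ => 1 / (n : ℝ)) fun n _ =>
        div_le_div_of_nonneg_right (qF_le n) (Nat.cast_nonneg n)) ?_
      refine Finset.sum_le_sum_of_subset_of_nonneg ?_ fun n _ _ => by positivity
      intro n hn
      simp only [Finset.mem_filter, Finset.mem_Ioc, Finset.mem_image] at hn ⊢
      obtain ⟨⟨h1, h2⟩, r, rfl⟩ := hn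
      exact ⟨r, ⟨Nat.pos_of_mul_pos_left h1, le_trans (Nat.le_mul_self r) h2⟩, rfl⟩
    · intro n hn
      rw [qF_sq n (Finset.mem_filter.1 hn).2, zero_div]
  refine h1.trans ?_
  have key : ∀ N : ℕ, ∑ k ∈ Ioc 0 (N + 1), 1 / ((k : ℝ) ^ 2) ≤ 2 - 1 / ((N : ℝ) + 1) := by
    intro N
    induction N with
    | zero => norm_num
    | succ n ih =>
      rw [Finset.sum_Ioc_succ_top (Nat.zero_le _)]
      have e : (1 : ℝ) / ((n + 1 + 1 : ℕ) : ℝ) ^ 2 ≤ 1 / (n + 1) - 1 / ((n + 1 : ℕ) + 1) := by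
        push_cast
        rw [div_sub_div _ _ (by positivity) (by positivity), div_le_div_iff₀ (by positivity)
          (by positivity)]
        nlinarith [(Nat.cast_nonneg n : (0 : ℝ) ≤ n)]
      linarith
  rcases Nat.eq_zero_or_pos N with rfl | hN
  · simp
  obtain ⟨n, rfl⟩ := Nat.exists_eq_add_of_le' hN
  have h := key n
  have : (0 : ℝ) ≤ 1 / (n + 1) := by positivity
  linarith

lemma Gf_sq (N : ℕ) (hN : 1 ≤ N) : G (fF 5) N ^ 2 ≤ 4 * (1 + 2 * Real.log N) := by
  have h1 := le_G_mul (fF_nonneg 5) (fF_nonneg 5) N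
  have h2 : 1 / 2 * G (fF 5 * fF 5) (N * N) ≤ G (fF 5 * fF 5 * chi) (N * N) := by
    rw [G_mul _ chi, G, Finset.mul_sum]
    refine Finset.sum_le_sum fun n hn => ?_
    have h := div_nonneg (mul_nonneg' (fF_nonneg 5) (fF_nonneg 5) n) (Nat.cast_nonneg (α := ℝ) n)
    simp only [Finset.mem_Ioc] at hn
    nlinarith [B_ge (N * N / n) (Nat.div_pos hn.2 hn.1)]
  rw [ffchi] at h2
  have h3 := G_mul_le c0_nonneg qF_nonneg (N * N)
  have h4 := G_c0_le (N * N)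
  have h5 := Gq_le (N * N)
  have h6 := G_nonneg c0_nonneg (N * N)
  have : (N : ℝ) ≠ 0 := by positivity
  rw [Nat.cast_mul, Real.log_mul this this] at h4
  nlinarith

lemma Gc0_ge (N : ℕ) (hN : 1 ≤ N) : (Real.log N - 2) / 7 ≤ G c0 N := by
  rcases lt_or_ge N 7 with h7 | h7
  · have h1 : Real.log N ≤ 2 := by
      rw [Real.log_le_iff_le_exp (by positivity)]
      have : Real.exp 1 ^ 2 = Real.exp 2 := by rw [← Real.exp_nat_mul]; norm_num
      have h2 := Real.exp_one_gt_d9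
      have h3 : (N : ℝ) ≤ 6 := by exact_mod_cast (by omega : N ≤ 6)
      nlinarith
    have := G_nonneg c0_nonneg N
    linarith
  set M := (N - 1) / 6 with hM
  have h1 : ∑ k ∈ Ioc 0 M, 1 / 7 * (1 / (k : ℝ)) ≤ G c0 N := by
    have e : ∑ k ∈ Ioc 0 M, 1 / ((6 * k + 1 : ℕ) : ℝ) ≤ G c0 N := by
      have e2 : ∑ k ∈ Ioc 0 M, 1 / ((6 * k + 1 : ℕ) : ℝ) =
          ∑ n ∈ (Ioc 0 M).image (fun k => 6 * k + 1), c0 n / (n : ℝ) := by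
        rw [Finset.sum_image]
        · refine Finset.sum_congr rfl fun k _ => ?_
          rw [c0_apply, if_pos (by omega)]
        · intro a _ b _ h
          simp only at h
          omega
      rw [e2, G]
      refine Finset.sum_le_sum_of_subset_of_nonneg ?_
        fun n _ _ => div_nonneg (c0_nonneg n) (Nat.cast_nonneg n)
      intro n hn
      simp only [Finset.mem_Ioc, Finset.mem_image] at hn ⊢
      obtain ⟨k, hk, rfl⟩ := hn
      omega
    refine le_trans (Finset.sum_le_sum fun k hk => ?_) e
    simp only [Finset.mem_Ioc] at hk
    have : (1 : ℝ) ≤ k := by exact_mod_cast hk.1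
    rw [one_div_mul_one_div]
    apply one_div_le_one_div_of_le (by positivity)
    push_cast; linarith
  rw [← Finset.mul_sum] at h1
  have h2 := le_harm M
  have h3 : Real.log N - 2 ≤ Real.log (M + 1) := by
    have : (N : ℝ) ≤ 6 * (M + 1) := by exact_mod_cast (by omega : N ≤ 6 * (M + 1))
    have h4 := Real.log_le_log (by positivity) this
    rw [Real.log_mul (by norm_num) (by positivity)] at h4
    have h5 : Real.log 6 ≤ 2 := by
      rw [Real.log_le_iff_le_exp (by positivity)]
      have : Real.exp 1 ^ 2 = Real.exp 2 := by rw [← Real.exp_nat_mul]; norm_num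
      have h2 := Real.exp_one_gt_d9
      nlinarith
    linarith
  linarith

lemma GfGh (N : ℕ) (hN : 1 ≤ N) : (Real.log N - 2) / 7 ≤ G (fF 5) N * G (fF 1) N := by
  refine (Gc0_ge N hN).trans ?_
  rw [← h_mul_f, mul_comm]
  exact G_mul_le (fF_nonneg 5) (fF_nonneg 1) N

lemma log4 : Real.log 4 ≤ 2 := by
  rw [Real.log_le_iff_le_exp (by positivity)]
  have : Real.exp 1 ^ 2 = Real.exp 2 := by rw [← Real.exp_nat_mul]; norm_num
  have h2 := Real.exp_one_gt_d9
  nlinarith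

lemma psi_le (N : ℕ) : ∑ n ∈ Ioc 0 N, Λ n ≤ 6 * N := by
  have h := Chebyshev.psi_le_const_mul_self (x := (N : ℝ)) (Nat.cast_nonneg N)
  rw [Chebyshev.psi, Nat.floor_natCast] at h
  have := log4
  nlinarith [(Nat.cast_nonneg N : (0 : ℝ) ≤ N)]

lemma sumlog_le (N : ℕ) : ∑ n ∈ Ioc 0 N, Real.log n ≤ N * Real.log N := by
  have : ∀ n ∈ Ioc 0 N, Real.log n ≤ Real.log N := by
    intro n hn
    simp only [Finset.mem_Ioc] at hn
    exact Real.log_le_log (by exact_mod_cast hn.1) (by exact_mod_cast hn.2)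
  simpa using Finset.sum_le_card_nsmul _ _ _ this

lemma sumlog_eq (N : ℕ) : ∑ n ∈ Ioc 0 N, Real.log n = Real.log (N.factorial) := by
  induction N with
  | zero => simp
  | succ n ih =>
    rw [Finset.sum_Ioc_succ_top (Nat.zero_le _), ih, Nat.factorial_succ, Nat.cast_mul,
      Real.log_mul (by positivity) (by positivity), add_comm]

lemma sumlog_ge (N : ℕ) (hN : 1 ≤ N) : N * Real.log N - N ≤ ∑ n ∈ Ioc 0 N, Real.log n := by
  rw [sumlog_eq]
  have h := Stirling.le_log_factorial_stirling (n := N) (by omega)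
  have h1 : 0 ≤ Real.log N := Real.log_nonneg (by exact_mod_cast hN)
  have h2 : 0 ≤ Real.log (2 * Real.pi) := Real.log_nonneg (by linarith [Real.pi_gt_three])
  linarith

lemma sum_Lam (N : ℕ) : ∑ n ∈ Ioc 0 N, Real.log n = ∑ n ∈ Ioc 0 N, Λ n * ((N / n : ℕ) : ℝ) := by
  rw [← sum_Ioc_mul_zeta_eq_sum, vonMangoldt_mul_zeta]
  simp [log_apply]

lemma floor_ge (N n : ℕ) (hn : 0 < n) : (N : ℝ) / n - 1 ≤ ((N / n : ℕ) : ℝ) := by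
  have h := Nat.lt_div_mul_add (a := N) hn
  have h' : (N : ℝ) < (N / n : ℕ) * n + n := by exact_mod_cast h
  have hn' : (0 : ℝ) < n := by exact_mod_cast hn
  rw [sub_le_iff_le_add, div_le_iff₀ hn']
  linarith

lemma GL_ge (N : ℕ) (hN : 1 ≤ N) : Real.log N - 1 ≤ G Λ N := by
  have h1 := sumlog_ge N hN
  have hN' : (0 : ℝ) < N := by exact_mod_cast hN
  have h2 : ∑ n ∈ Ioc 0 N, Real.log n ≤ N * G Λ N := by
    rw [sum_Lam, G, Finset.mul_sum]
    refine Finset.sum_le_sum fun n _ => ?_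
    have := Nat.cast_div_le (α := ℝ) (m := N) (n := n)
    calc Λ n * ((N / n : ℕ) : ℝ) ≤ Λ n * (N / n) :=
          mul_le_mul_of_nonneg_left this vonMangoldt_nonneg
      _ = _ := by ring
  nlinarith

lemma GL_le (N : ℕ) (hN : 1 ≤ N) : G Λ N ≤ Real.log N + 6 := by
  have h1 := sumlog_le N
  have hN' : (0 : ℝ) < N := by exact_mod_cast hN
  have h2 : N * G Λ N - ∑ n ∈ Ioc 0 N, Λ n ≤ ∑ n ∈ Ioc 0 N, Real.log n := by
    rw [sum_Lam, G, Finset.mul_sum, ← Finset.sum_sub_distrib]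
    refine Finset.sum_le_sum fun n hn => ?_
    have := floor_ge N n (Finset.mem_Ioc.1 hn).1
    calc (N : ℝ) * (Λ n / n) - Λ n = Λ n * (N / n - 1) := by ring
      _ ≤ _ := mul_le_mul_of_nonneg_left this vonMangoldt_nonneg
  have h3 := psi_le N
  nlinarith

lemma chilog : chi.pmul log = chi.pmul Λ * chi := by
  rw [← vonMangoldt_mul_zeta, cm_chi.pmul_mul]
  congr 1
  ext n; by_cases h : n = 0 <;> simp [h]

lemma chilog_le (N : ℕ) : |G (chi.pmul log) N| ≤ 1 := by
  have e : ∀ n, (chi.pmul log) n / n = chi n * (Real.log n / n) := by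
    intro n; rw [pmul_apply, log_apply]; ring
  simp only [G, e]
  have h3 : ∀ n ∈ Ioc 0 3, chi n * (Real.log n / n) = 0 := by
    intro n hn
    simp only [Finset.mem_Ioc] at hn
    obtain ⟨h1, h2⟩ := hn
    interval_cases n <;> simp [chi_apply]
  rcases le_or_gt N 3 with h | h
  · rw [Finset.sum_eq_zero]
    · simp
    · intro n hn
      exact h3 n (Finset.Ioc_subset_Ioc_right h hn)
  · rw [← Finset.sum_Ioc_consecutive _ (Nat.zero_le 3) h.le, Finset.sum_eq_zero h3, zero_add]
    refine (abel_abs (fun k => Real.log k / k) 3 N h.le (fun k => by positivity) ?_).trans ?_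
    · intro k hk
      have hk' : (3 : ℝ) ≤ k := by exact_mod_cast hk
      have := Real.exp_one_lt_d9
      apply Real.log_div_self_antitoneOn
      · change Real.exp 1 ≤ _; linarith
      · change Real.exp 1 ≤ _; push_cast; linarith
      · push_cast; linarith
    · have := Real.log_le_sub_one_of_pos (x := 3) (by norm_num)
      push_cast
      rw [div_le_one (by norm_num)]
      linarith

lemma chi_abs (n : ℕ) : |chi n| ≤ 1 := by
  rw [chi_apply]; split_ifs <;> norm_num

lemma Mchi (N : ℕ) (hN : 1 ≤ N) : |G (chi.pmul Λ) N| ≤ 26 := by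
  have hN' : (0 : ℝ) < N := by exact_mod_cast hN
  have h1 := chilog_le N
  rw [chilog, G_mul] at h1
  have h2 : |∑ n ∈ Ioc 0 N, (chi.pmul Λ) n / n * G chi (N / n) -
      G (chi.pmul Λ) N * G chi N| ≤ 12 := by
    rw [G, Finset.sum_mul, ← Finset.sum_sub_distrib]
    refine (Finset.abs_sum_le_sum_abs _ _).trans ?_
    calc _ ≤ ∑ n ∈ Ioc 0 N, 2 / N * Λ n := by
          refine Finset.sum_le_sum fun n hn => ?_
          simp only [Finset.mem_Ioc] at hn
          rw [← mul_sub, abs_mul, abs_div, pmul_apply, abs_mul, abs_of_nonneg vonMangoldt_nonneg,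
            abs_sub_comm, Nat.abs_cast]
          have hpos := Nat.div_pos hn.2 hn.1
          have hb := B_tail (N / n) N hpos (Nat.div_le_self _ _)
          have hn' : (0 : ℝ) < n := by exact_mod_cast hn.1
          have hp' : (1 : ℝ) ≤ (N / n : ℕ) := by exact_mod_cast hpos
          have hf := floor_ge N n hn.1
          have hb2 : 1 / ((N / n : ℕ) : ℝ) ≤ 2 * n / N := by
            rw [div_le_div_iff₀ (by positivity) hN', ← sub_nonneg]
            have : (N : ℝ) = N / n * n := by field_simp
            have h2 : (N : ℝ) / n ≤ 2 * (N / n : ℕ) := by linarith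
            have := mul_le_mul_of_nonneg_right h2 hn'.le
            linarith
          have hL : 0 ≤ Λ n := vonMangoldt_nonneg
          calc |chi n| * Λ n / n * |G chi N - G chi (N / n)|
              ≤ 1 * Λ n / n * (2 * n / N) := by
                refine mul_le_mul ?_ (hb.trans hb2) (abs_nonneg _) (by positivity)
                exact div_le_div_of_nonneg_right
                  (mul_le_mul_of_nonneg_right (chi_abs n) hL) hn'.le
            _ = 2 / N * Λ n := by field_simp
      _ = 2 / N * ∑ n ∈ Ioc 0 N, Λ n := by rw [Finset.mul_sum]
      _ ≤ 2 / N * (6 * N) := mul_le_mul_of_nonneg_left (psi_le N) (by positivity)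
      _ = 12 := by field_simp; norm_num
  have h3 : |G (chi.pmul Λ) N * G chi N| ≤ 13 := by
    rw [abs_le] at *
    constructor <;> linarith
  have hB := B_ge N hN
  rw [abs_mul, abs_of_nonneg (by linarith : 0 ≤ G chi N)] at h3
  nlinarith [abs_nonneg (G (chi.pmul Λ) N)]

lemma half_pow (N : ℕ) : ∑ k ∈ Ioc 0 N, (1 / 2 : ℝ) ^ k ≤ 1 := by
  have : ∀ N, ∑ k ∈ Ioc 0 N, (1 / 2 : ℝ) ^ k = 1 - (1 / 2 : ℝ) ^ N := by
    intro N
    induction N with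
    | zero => simp
    | succ n ih => rw [Finset.sum_Ioc_succ_top (Nat.zero_le _), ih, pow_succ]; ring
  rw [this]
  have : (0 : ℝ) ≤ (1 / 2) ^ N := by positivity
  linarith

lemma bad_le (N M : ℕ) : ∑ n ∈ Ioc M N, (1 - c0 n) * Λ n / n ≤ 4 := by
  classical
  have hnn : ∀ n, 0 ≤ Λ n / n := fun n => div_nonneg vonMangoldt_nonneg (Nat.cast_nonneg n)
  have hpp : ∀ p : ℕ, p.Prime → 2 ≤ p → p ≤ 4 →
      ∑ n ∈ (Ioc 0 N).image (fun k => p ^ k), Λ n / n ≤ 2 := by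
    intro p hp h2 h4
    rw [Finset.sum_image (fun a _ b _ h => Nat.pow_right_injective h2 h)]
    calc _ ≤ ∑ k ∈ Ioc 0 N, 2 * (1 / 2 : ℝ) ^ k := by
          refine Finset.sum_le_sum fun k hk => ?_
          rw [vonMangoldt_apply_pow (Finset.mem_Ioc.1 hk).1.ne', vonMangoldt_apply_prime hp,
            one_div, inv_pow, ← div_eq_mul_inv]
          push_cast
          have h2' : (2 : ℝ) ≤ p := by exact_mod_cast h2
          have h4' : (p : ℝ) ≤ 4 := by exact_mod_cast h4
          apply div_le_div₀ (by norm_num) _ (by positivity) (by gcongr)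
          exact (Real.log_le_log (by positivity) h4').trans log4
      _ = 2 * ∑ k ∈ Ioc 0 N, (1 / 2 : ℝ) ^ k := by rw [Finset.mul_sum]
      _ ≤ 2 := by linarith [half_pow N]
  have key : ∑ n ∈ Ioc M N, (1 - c0 n) * Λ n / n ≤
      ∑ n ∈ (Ioc 0 N).image (fun k => 2 ^ k) ∪ (Ioc 0 N).image (fun k => 3 ^ k), Λ n / n := by
    rw [← Finset.sum_filter_add_sum_filter_not (Ioc M N) (fun n => (1 - c0 n) * Λ n / n ≠ 0)]
    rw [Finset.sum_eq_zero (s := (Ioc M N).filter (fun n => ¬ ((1 - c0 n) * Λ n / n ≠ 0))),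
      add_zero]
    · refine le_trans (Finset.sum_le_sum (g := fun n : ℕ => Λ n / n) fun n _ => ?_)
        (Finset.sum_le_sum_of_subset_of_nonneg ?_ fun n _ _ => hnn n)
      · have := c0_nonneg n
        rw [mul_div_assoc]
        nlinarith [hnn n]
      · intro n hn
        simp only [Finset.mem_filter, Finset.mem_Ioc, Finset.mem_union, Finset.mem_image] at hn ⊢
        obtain ⟨⟨hM, hn1⟩, hne⟩ := hn
        have hL : Λ n ≠ 0 := by rintro h; simp [h] at hne
        have hc : 1 - c0 n ≠ 0 := by rintro h; simp [h] at hne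
        rw [vonMangoldt_ne_zero_iff] at hL
        obtain ⟨p, k, hp, hk, rfl⟩ := (isPrimePow_nat_iff _).1 hL
        have hkN : k ≤ N := le_trans (Nat.lt_pow_self hp.one_lt).le hn1
        have hcp : c0 p ≠ 1 := by
          rintro h; rw [cm_c0.pow, h] at hc; simp at hc
        have : p = 2 ∨ p = 3 := by
          by_contra hcon
          push Not at hcon
          have h2 : p % 2 ≠ 0 := fun h => hcon.1
            ((Nat.prime_dvd_prime_iff_eq Nat.prime_two hp).1 (Nat.dvd_of_mod_eq_zero h)).symm
          have h3 : p % 3 ≠ 0 := fun h => hcon.2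
            ((Nat.prime_dvd_prime_iff_eq Nat.prime_three hp).1 (Nat.dvd_of_mod_eq_zero h)).symm
          apply hcp
          rw [c0_apply]
          rcases (by omega : p % 6 = 1 ∨ p % 6 = 5) with h | h <;> simp [h]
        rcases this with rfl | rfl
        · left; exact ⟨k, ⟨hk, hkN⟩, rfl⟩
        · right; exact ⟨k, ⟨hk, hkN⟩, rfl⟩
    · intro n hn
      have := (Finset.mem_filter.1 hn).2
      push Not at this
      exact this
  refine key.trans ?_
  have h1 := Finset.sum_union_inter (s₁ := (Ioc 0 N).image (fun k => 2 ^ k))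
    (s₂ := (Ioc 0 N).image (fun k => 3 ^ k)) (f := fun n : ℕ => Λ n / (n : ℝ))
  have h2 := hpp 2 Nat.prime_two le_rfl (by norm_num)
  have h3 := hpp 3 Nat.prime_three (by norm_num) (by norm_num)
  have h4 : 0 ≤ ∑ n ∈ (Ioc 0 N).image (fun k => 2 ^ k) ∩ (Ioc 0 N).image (fun k => 3 ^ k),
    Λ n / (n : ℝ) := Finset.sum_nonneg fun n _ => hnn n
  linarith

lemma f_ge (n : ℕ) : (c0 n - chi n) / 2 * Λ n ≤ fF 5 n * Λ n := by
  by_cases h5 : n % 6 = 5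
  · by_cases hL : Λ n = 0
    · simp [hL]
    apply mul_le_mul_of_nonneg_right _ vonMangoldt_nonneg
    obtain ⟨p, k, hp, hk, rfl⟩ := (isPrimePow_nat_iff _).1 (vonMangoldt_ne_zero_iff.1 hL)
    have hc : chi (p ^ k) = -1 := by rw [chi_apply]; simp [h5]
    rw [cm_chi.pow, chi_apply] at hc
    have hp5 : p % 6 = 5 := by
      by_contra hcon
      simp only [hcon, if_false] at hc
      split_ifs at hc <;> simp [hk.ne'] at hc <;> linarith
    rw [(cm_fF 5).pow, fF_prime _ _ hp, c0_apply, chi_apply]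
    simp [h5, hp5]
  · have : c0 n - chi n = 0 := by
      rw [c0_apply, chi_apply]; simp [h5]
    rw [this]
    simpa using mul_nonneg (fF_nonneg 5 n) vonMangoldt_nonneg

lemma G_window (u : ArithmeticFunction ℝ) {M N : ℕ} (h : M ≤ N) :
    ∑ n ∈ Ioc M N, u n / n = G u N - G u M := by
  rw [G, G, ← Finset.sum_Ioc_consecutive _ (Nat.zero_le M) h]; ring

lemma psif : ∃ K : ℕ, 1 ≤ K ∧ ∀ N : ℕ, K ≤ N →
    (N : ℝ) / (2 * K) ≤ ∑ n ∈ Ioc 0 N, fF 5 n * Λ n := by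
  obtain ⟨K, hK⟩ := exists_nat_ge (Real.exp 65)
  have hK0 : (0 : ℝ) < K := (Real.exp_pos _).trans_le hK
  have hK1 : 0 < K := by exact_mod_cast hK0
  have hlogK : 65 ≤ Real.log K := (Real.le_log_iff_exp_le hK0).2 hK
  refine ⟨K, hK1, fun N hN => ?_⟩
  have hM1 : 1 ≤ N / K := Nat.div_pos hN hK1
  have hMN : N / K ≤ N := Nat.div_le_self _ _
  have hMK : N / K * K ≤ N := Nat.div_mul_le_self N K
  have hfl := floor_ge N K hK1
  set M := N / K with hM
  have hN1 : 1 ≤ N := hM1.trans hMN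
  have hM0 : (1 : ℝ) ≤ M := by exact_mod_cast hM1
  have hMK' : (M : ℝ) * K ≤ N := by exact_mod_cast hMK
  have hlog : Real.log M + Real.log K ≤ Real.log N := by
    rw [← Real.log_mul (by positivity) (by positivity)]
    exact Real.log_le_log (by positivity) hMK'
  have hW : ∑ n ∈ Ioc M N, (c0 n - chi n) / 2 * Λ n / n =
      ((G Λ N - G Λ M) - ∑ n ∈ Ioc M N, (1 - c0 n) * Λ n / n
        - (G (chi.pmul Λ) N - G (chi.pmul Λ) M)) / 2 := by
    rw [← G_window _ hMN, ← G_window _ hMN, ← Finset.sum_sub_distrib, ← Finset.sum_sub_distrib,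
      Finset.sum_div]
    refine Finset.sum_congr rfl fun n _ => ?_
    rw [pmul_apply]; ring
  have h1 := GL_ge N hN1
  have h2 := GL_le M hM1
  have h3 := bad_le N M
  have h4 := abs_le.1 (Mchi N hN1)
  have h5 := abs_le.1 (Mchi M hM1)
  have hW1 : 1 ≤ ∑ n ∈ Ioc M N, (c0 n - chi n) / 2 * Λ n / n := by
    rw [hW]; linarith
  calc (N : ℝ) / (2 * K) ≤ M := by
        have : (N : ℝ) / (2 * K) = N / K / 2 := by field_simp
        rw [this]; linarith
    _ ≤ M * ∑ n ∈ Ioc M N, (c0 n - chi n) / 2 * Λ n / n := by nlinarith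
    _ ≤ ∑ n ∈ Ioc M N, fF 5 n * Λ n := by
        rw [Finset.mul_sum]
        refine Finset.sum_le_sum fun n hn => ?_
        have hn1 : (M : ℝ) ≤ n := by exact_mod_cast (Finset.mem_Ioc.1 hn).1.le
        have hn0 : (0 : ℝ) < n := by linarith
        refine le_trans ?_ (f_ge n)
        have hnn : 0 ≤ (c0 n - chi n) / 2 * Λ n := by
          refine mul_nonneg ?_ vonMangoldt_nonneg
          rw [c0_apply, chi_apply]; split_ifs <;> norm_num
        rw [← mul_div_assoc, div_le_iff₀ hn0]
        nlinarith
    _ ≤ _ := Finset.sum_le_sum_of_subset_of_nonneg (Finset.Ioc_subset_Ioc_left (Nat.zero_le M))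
        fun n _ _ => mul_nonneg (fF_nonneg 5 n) vonMangoldt_nonneg

/-- The counting function. -/
noncomputable def F (N : ℕ) : ℝ := ∑ n ∈ Ioc 0 N, fF 5 n

lemma flog : (fF 5).pmul log = fF 5 * (fF 5).pmul Λ := by
  rw [← vonMangoldt_mul_zeta, (cm_fF 5).pmul_mul, mul_comm]
  congr 1
  ext n; by_cases h : n = 0 <;> simp [h]

lemma flog_sum (N : ℕ) : ∑ n ∈ Ioc 0 N, fF 5 n * Real.log n =
    ∑ m ∈ Ioc 0 N, fF 5 m * ∑ d ∈ Ioc 0 (N / m), fF 5 d * Λ d := by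
  have h := sum_Ioc_mul_eq_sum_sum (fF 5) ((fF 5).pmul Λ) N
  rw [← flog] at h
  simpa [pmul_apply, log_apply] using h

lemma F_upper0 (N : ℕ) (hN : 1 ≤ N) : F N * Real.log N ≤ 6 * N * G (fF 5) N + N := by
  have h1 : ∑ n ∈ Ioc 0 N, fF 5 n * Real.log n ≤ 6 * N * G (fF 5) N := by
    rw [flog_sum, G, Finset.mul_sum]
    refine Finset.sum_le_sum fun m _ => ?_
    have h2 : ∑ d ∈ Ioc 0 (N / m), fF 5 d * Λ d ≤ 6 * (N / m) := by
      calc _ ≤ ∑ d ∈ Ioc 0 (N / m), Λ d := Finset.sum_le_sum fun d _ => by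
              have h := fF_le 5 d
              have h' : 0 ≤ Λ d := vonMangoldt_nonneg
              nlinarith
        _ ≤ 6 * ((N / m : ℕ) : ℝ) := psi_le _
        _ ≤ _ := by linarith [Nat.cast_div_le (α := ℝ) (m := N) (n := m)]
    calc _ ≤ fF 5 m * (6 * (N / m)) := mul_le_mul_of_nonneg_left h2 (fF_nonneg 5 m)
      _ = _ := by ring
  have h3 : ∑ n ∈ Ioc 0 N, fF 5 n * (Real.log N - Real.log n) ≤ N := by
    calc _ ≤ ∑ n ∈ Ioc 0 N, (Real.log N - Real.log n) := by
          refine Finset.sum_le_sum fun n hn => ?_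
          simp only [Finset.mem_Ioc] at hn
          have := Real.log_le_log (x := (n : ℝ)) (y := N) (by exact_mod_cast hn.1)
            (by exact_mod_cast hn.2)
          nlinarith [fF_le 5 n]
      _ = N * Real.log N - ∑ n ∈ Ioc 0 N, Real.log n := by simp
      _ ≤ N := by linarith [sumlog_ge N hN]
  have h4 : F N * Real.log N = ∑ n ∈ Ioc 0 N, fF 5 n * Real.log n +
      ∑ n ∈ Ioc 0 N, fF 5 n * (Real.log N - Real.log n) := by
    rw [F, Finset.sum_mul, ← Finset.sum_add_distrib]
    exact Finset.sum_congr rfl fun _ _ => by ring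
  linarith

lemma F_upper (N : ℕ) (hN : 1 ≤ N) (hL : 1 ≤ Real.log N) :
    F N ≤ 25 * N / √(Real.log N) := by
  have h1 := F_upper0 N hN
  have h2 := Gf_sq N hN
  set L := Real.log N
  have hs := Real.sq_sqrt (by linarith : 0 ≤ L)
  have hs1 : 1 ≤ √L := Real.one_le_sqrt.2 hL
  set s := √L
  have h3 : G (fF 5) N ≤ 4 * s := by
    refine (abs_le_of_sq_le_sq' ?_ (by linarith)).2
    nlinarith
  have hN' : (0 : ℝ) < N := by exact_mod_cast hN
  rw [le_div_iff₀ (by linarith)]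
  have h4 : F N * s * s ≤ 25 * N * s := by
    have : F N * s * s = F N * L := by rw [← hs]; ring
    rw [this]
    have h5 : 6 * N * G (fF 5) N ≤ 6 * N * (4 * s) := by gcongr
    nlinarith
  exact le_of_mul_le_mul_right h4 (by linarith)

lemma F_lower0 (K : ℕ) (hK1 : 1 ≤ K)
    (hK : ∀ N : ℕ, K ≤ N → (N : ℝ) / (2 * K) ≤ ∑ n ∈ Ioc 0 N, fF 5 n * Λ n)
    (N : ℕ) : N / (4 * K) * G (fF 5) (N / K) ≤ F N * Real.log N := by
  have hK0 : (0 : ℝ) < K := by exact_mod_cast hK1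
  have h1 : ∑ n ∈ Ioc 0 N, fF 5 n * Real.log n ≤ F N * Real.log N := by
    rw [F, Finset.sum_mul]
    refine Finset.sum_le_sum fun n hn => ?_
    simp only [Finset.mem_Ioc] at hn
    exact mul_le_mul_of_nonneg_left (Real.log_le_log (by exact_mod_cast hn.1)
            (by exact_mod_cast hn.2)) (fF_nonneg 5 n)
  refine le_trans ?_ h1
  rw [flog_sum, G, Finset.mul_sum]
  refine le_trans (Finset.sum_le_sum fun m hm => ?_)
    (Finset.sum_le_sum_of_subset_of_nonneg (Finset.Ioc_subset_Ioc_right (Nat.div_le_self N K))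
      fun m _ _ => mul_nonneg (fF_nonneg 5 m)
        (Finset.sum_nonneg fun d _ => mul_nonneg (fF_nonneg 5 d) vonMangoldt_nonneg))
  simp only [Finset.mem_Ioc] at hm
  have hmK : K ≤ N / m := by
    rw [Nat.le_div_iff_mul_le hm.1, mul_comm]
    exact (Nat.le_div_iff_mul_le hK1).1 hm.2
  have h2 := hK _ hmK
  have h3 := floor_ge N m hm.1
  have h4 : (1 : ℝ) ≤ (N / m : ℕ) := by exact_mod_cast hK1.trans hmK
  have h5 : (N : ℝ) / m / 2 ≤ (N / m : ℕ) := by linarith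
  calc (N : ℝ) / (4 * K) * (fF 5 m / m) = fF 5 m * ((N / m / 2) / (2 * K)) := by
        ring
    _ ≤ fF 5 m * (((N / m : ℕ) : ℝ) / (2 * K)) := by
        apply mul_le_mul_of_nonneg_left _ (fF_nonneg 5 m)
        gcongr
    _ ≤ _ := mul_le_mul_of_nonneg_left h2 (fF_nonneg 5 m)

lemma Gf_lower (M : ℕ) (hM : 1 ≤ M) (hl : 4 ≤ Real.log M) :
    √(Real.log M) / 28 ≤ G (fF 5) M := by
  have h1 := GfGh M hM
  have h2 := Gh_sq M hM
  have h0 := G_nonneg (fF_nonneg 5) M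
  set l := Real.log M
  have hs := Real.sq_sqrt (by linarith : 0 ≤ l)
  have hs1 : 1 ≤ √l := Real.one_le_sqrt.2 (by linarith)
  set s := √l
  have h3 : G (fF 1) M ≤ 2 * s := by
    refine (abs_le_of_sq_le_sq' ?_ (by linarith)).2
    nlinarith
  have h4 : s / 28 * (2 * s) ≤ G (fF 5) M * (2 * s) := by
    have : G (fF 5) M * G (fF 1) M ≤ G (fF 5) M * (2 * s) := mul_le_mul_of_nonneg_left h3 h0
    nlinarith
  exact le_of_mul_le_mul_right h4 (by linarith)

lemma F_lower : ∃ c : ℝ, 0 < c ∧ ∃ N₀ : ℕ, ∀ N : ℕ, N₀ ≤ N →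
    c * N / √(Real.log N) ≤ F N := by
  obtain ⟨K, hK1, hK⟩ := psif
  have hK0 : (1 : ℝ) ≤ K := by exact_mod_cast hK1
  obtain ⟨N₁, hN₁⟩ := exists_nat_ge (Real.exp 8)
  refine ⟨1 / (224 * K), by positivity, max N₁ (4 * K ^ 2), fun N hN => ?_⟩
  have hNe : Real.exp 8 ≤ N := hN₁.trans (by exact_mod_cast (le_max_left _ _).trans hN)
  have hNK : (4 : ℝ) * K ^ 2 ≤ N := by exact_mod_cast (le_max_right _ _).trans hN
  have hN0 : (0 : ℝ) < N := (Real.exp_pos _).trans_le hNe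
  have hL : 8 ≤ Real.log N := (Real.le_log_iff_exp_le hN0).2 hNe
  have hfl := floor_ge N K hK1
  have hKN : K ≤ N := by
    have : (K : ℝ) ≤ N := by nlinarith
    exact_mod_cast this
  have hM1 : 1 ≤ N / K := Nat.div_pos hKN hK1
  have hlow := F_lower0 K hK1 hK N
  set M := N / K
  have hM0 : (1 : ℝ) ≤ M := by exact_mod_cast hM1
  have hM2 : (N : ℝ) ≤ 2 * K * M := by
    have h : (N : ℝ) / K ≤ 2 * M := by linarith
    rw [div_le_iff₀ (by linarith)] at h
    linarith
  have hlM : Real.log N / 2 ≤ Real.log M := by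
    have h2 : (N : ℝ) ≤ M ^ 2 := by
      have h3 : (N : ℝ) * N ≤ N * M ^ 2 := by
        calc (N : ℝ) * N ≤ (2 * K * M) * (2 * K * M) := by gcongr
          _ = 4 * K ^ 2 * M ^ 2 := by ring
          _ ≤ N * M ^ 2 := by gcongr
      exact le_of_mul_le_mul_left h3 hN0
    have := Real.log_le_log hN0 h2
    rw [Real.log_pow] at this
    push_cast at this
    linarith
  have hG := Gf_lower M hM1 (by linarith)
  have hsq : √(Real.log N) / 2 ≤ √(Real.log M) := by
    apply Real.le_sqrt_of_sq_le
    rw [div_pow, Real.sq_sqrt (by linarith)]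
    linarith
  have hG' : √(Real.log N) / 56 ≤ G (fF 5) M := by linarith
  set L := Real.log N
  have hs := Real.sq_sqrt (by linarith : 0 ≤ L)
  have hs1 : 1 ≤ √L := Real.one_le_sqrt.2 (by linarith)
  set s := √L
  rw [div_le_iff₀ (by linarith)]
  have h5 : 1 / (224 * K) * N * s ≤ F N * s * s := by
    calc 1 / (224 * K) * N * s = N / (4 * K) * (s / 56) := by field_simp; norm_num
      _ ≤ N / (4 * K) * G (fF 5) M := by gcongr
      _ ≤ F N * L := hlow
      _ = F N * s * s := by rw [← hs]; ring
  exact le_of_mul_le_mul_right h5 (by linarith)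

lemma ncard_eq (x : ℝ) (hx : 0 ≤ x) : ({n : ℕ | 0 < n ∧ (n : ℝ) ≤ x ∧
          ∀ p : ℕ, p.Prime → p ∣ n → p % 6 = 5}.ncard : ℝ) = F ⌊x⌋₊ := by
  classical
  have : {n : ℕ | 0 < n ∧ (n : ℝ) ≤ x ∧ ∀ p : ℕ, p.Prime → p ∣ n → p % 6 = 5} =
      (((Ioc 0 ⌊x⌋₊).filter (fun n => PF 5 n) : Finset ℕ) : Set ℕ) := by
    ext n
    rw [Finset.mem_coe, Finset.mem_filter, Finset.mem_Ioc, Nat.le_floor_iff hx]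
    constructor
    · rintro ⟨h1, h2, h3⟩; exact ⟨⟨h1, h2⟩, h1.ne', h3⟩
    · rintro ⟨⟨h1, h2⟩, _, h3⟩; exact ⟨h1, h2, h3⟩
  rw [this, Set.ncard_coe_finset, F, Finset.card_filter]
  push_cast
  exact Finset.sum_congr rfl fun n _ => by rw [fF_apply]

lemma main : ∃ c₁ c₂ x₀ : ℝ, 0 < c₁ ∧ 0 < c₂ ∧ 3 ≤ x₀ ∧ ∀ x : ℝ, x₀ ≤ x →
      c₁ * x / √(Real.log x) ≤ F ⌊x⌋₊ ∧ F ⌊x⌋₊ ≤ c₂ * x / √(Real.log x) := by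
  obtain ⟨c, hc, N₀, hN₀⟩ := F_lower
  refine ⟨c / 2, 50, max 20 (N₀ + 1), by positivity, by norm_num,
    le_trans (by norm_num) (le_max_left _ _), fun x hx => ?_⟩
  have hx20 : 20 ≤ x := (le_max_left _ _).trans hx
  have hxN : (N₀ : ℝ) + 1 ≤ x := (le_max_right _ _).trans hx
  have h1 := Nat.floor_le (by linarith : 0 ≤ x)
  have h2 := Nat.lt_floor_add_one x
  have h3 : N₀ ≤ ⌊x⌋₊ := Nat.le_floor (by linarith)
  set N := ⌊x⌋₊
  have hNx : x / 2 ≤ N := by linarith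
  have hN19 : (19 : ℝ) < N := by linarith
  have hN1 : 1 ≤ N := by
    have : (1 : ℝ) ≤ N := by linarith
    exact_mod_cast this
  have hL1 : 1 ≤ Real.log N := by
    rw [Real.le_log_iff_exp_le (by linarith)]
    linarith [Real.exp_one_lt_d9]
  have hLx : Real.log N ≤ Real.log x := Real.log_le_log (by linarith) h1
  have hLx2 : Real.log x ≤ 2 * Real.log N := by
    have := Real.log_le_log (by linarith) (show x ≤ (N : ℝ) ^ 2 by nlinarith)
    rw [Real.log_pow] at this
    exact_mod_cast this
  have hs1 : 1 ≤ √(Real.log N) := Real.one_le_sqrt.2 hL1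
  have hs2 : √(Real.log N) ≤ √(Real.log x) := Real.sqrt_le_sqrt hLx
  have hs3 : √(Real.log x) ≤ 2 * √(Real.log N) := by
    rw [Real.sqrt_le_left (by linarith), mul_pow, Real.sq_sqrt (by linarith)]
    linarith
  constructor
  · refine le_trans ?_ (hN₀ N h3)
    apply div_le_div₀ (by positivity) _ (by linarith) hs2
    nlinarith
  · refine (F_upper N hN1 hL1).trans ?_
    rw [div_le_div_iff₀ (by linarith) (by linarith)]
    calc 25 * (N : ℝ) * √(Real.log x) ≤ 25 * x * (2 * √(Real.log N)) := by gcongr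
      _ = _ := by ring

end S8


/-- The number of positive integers `n ≤ x` all of whose prime factors
are `≡ 5 (mod 6)` has exact order of magnitude `x/(log x)^{1/2}`. -/
theorem stmt_8 :
    ∃ c₁ c₂ x₀ : ℝ, 0 < c₁ ∧ 0 < c₂ ∧ 3 ≤ x₀ ∧ ∀ x : ℝ, x₀ ≤ x →
      c₁ * x / Real.log x ^ ((1 : ℝ) / 2) ≤
        ({n : ℕ | 0 < n ∧ (n : ℝ) ≤ x ∧
          ∀ p : ℕ, p.Prime → p ∣ n → p % 6 = 5}.ncard : ℝ) ∧
      ({n : ℕ | 0 < n ∧ (n : ℝ) ≤ x ∧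
          ∀ p : ℕ, p.Prime → p ∣ n → p % 6 = 5}.ncard : ℝ) ≤
        c₂ * x / Real.log x ^ ((1 : ℝ) / 2) := by
  obtain ⟨c₁, c₂, x₀, h1, h2, h3, h⟩ := S8.main
  refine ⟨c₁, c₂, x₀, h1, h2, h3, fun x hx => ?_⟩
  rw [S8.ncard_eq x (by linarith), ← Real.sqrt_eq_rpow]
  exact h x hx
end
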